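/- (Existence of J-holomorphic discs in prescribed directions.) Let Ω be an open set in ℝ^{2n} with an almost complex structure J and let p ∈ Ω. Then there exists a neighborhood 𝒱 of 0 in ℝ^{2n} such that for every v ∈ 𝒱 there exists a smooth J-holomorphic disc f : Δ → Ω with f(0) = p and Df(0)(1) = v, where 1 denotes the unit vector ∂/∂x in ℂ ≅ ℝ². -/

import Mathlib

open Metric Set Filter Topology Asymptotics

noncomputable section

/-- The standard complex structure `J_st` (multiplication by `i`) on a complex
normed space, viewed as a real-linear endomorphism. -/
def Jst (E : Type*) [NormedAddCommGroup E] [NormedSpace ℂ E] : E →L[ℝ] E :=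
  ContinuousLinearMap.restrictScalars ℝ (Complex.I • ContinuousLinearMap.id ℂ E)

variable {E F : Type*} [NormedAddCommGroup E] [NormedSpace ℂ E]
  [NormedAddCommGroup F] [NormedSpace ℂ F]

/-- `J` is an almost complex structure on the set `Ω`: a smooth field of real-linear
endomorphisms with `J x ∘ J x = -id`. -/
structure IsACS (Ω : Set E) (J : E → E →L[ℝ] E) : Prop where
  smooth : ContDiffOn ℝ (⊤ : ℕ∞) J Ω
  sq : ∀ x ∈ Ω, (J x).comp (J x) = -(ContinuousLinearMap.id ℝ E)

/-- `f` is `(J', J)`-holomorphic on `s`: `Df(x) ∘ J'(x) = J(f x) ∘ Df(x)`. -/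
def IsHolomorphicMapOn (J' : E → E →L[ℝ] E) (J : F → F →L[ℝ] F) (f : E → F)
    (s : Set E) : Prop :=
  ∀ x ∈ s, DifferentiableAt ℝ f x ∧
    (fderiv ℝ f x).comp (J' x) = (J (f x)).comp (fderiv ℝ f x)

/-- The Levi form `L^J(r)(x)(X) = -d(J⋆dr)(x)(X, J x X)` where `J⋆dr` is the 1-form
`X ↦ dr(x)(J x X)` and `dω(x)(X,Y) = (Dω(x)X)(Y) - (Dω(x)Y)(X)`. -/
def leviForm (J : E → E →L[ℝ] E) (r : E → ℝ) (x : E) (X : E) : ℝ :=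
  -((fderiv ℝ (fun y => (fderiv ℝ r y).comp (J y)) x X) (J x X)
    - (fderiv ℝ (fun y => (fderiv ℝ r y).comp (J y)) x (J x X)) X)

/-- `r` is strictly `J`-plurisubharmonic on `s`. -/
def StrictPSHOn (J : E → E →L[ℝ] E) (r : E → ℝ) (s : Set E) : Prop :=
  ∀ x ∈ s, ∀ X : E, X ≠ 0 → 0 < leviForm J r x X

/-- `r` is `J`-plurisubharmonic on `s` (nonnegative Levi form). -/
def PSHOn (J : E → E →L[ℝ] E) (r : E → ℝ) (s : Set E) : Prop :=
  ∀ x ∈ s, ∀ X : E, 0 ≤ leviForm J r x X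

/-- `C⁰` norm of `g` on `K`. -/
def c0Norm {G : Type*} [NormedAddCommGroup G] (g : E → G) (K : Set E) : ℝ :=
  ⨆ x : K, ‖g (x : E)‖

/-- `C¹` norm of `g` on `K`. -/
def c1Norm {G : Type*} [NormedAddCommGroup G] [NormedSpace ℝ G] (g : E → G) (K : Set E) : ℝ :=
  ⨆ x : K, max ‖g (x : E)‖ ‖fderiv ℝ g (x : E)‖

/-- `C¹` distance between `g` and `h` on `K`. -/
def c1Dist {G : Type*} [NormedAddCommGroup G] [NormedSpace ℝ G] (g h : E → G) (K : Set E) : ℝ :=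
  ⨆ x : K, max ‖g (x : E) - h (x : E)‖ ‖fderiv ℝ g (x : E) - fderiv ℝ h (x : E)‖

/-- `C²` distance between `g` and `h` on `K`. -/
def c2Dist {G : Type*} [NormedAddCommGroup G] [NormedSpace ℝ G] (g h : E → G) (K : Set E) : ℝ :=
  ⨆ x : K, max ‖g (x : E) - h (x : E)‖
    (max ‖fderiv ℝ g (x : E) - fderiv ℝ h (x : E)‖
      ‖fderiv ℝ (fderiv ℝ g) (x : E) - fderiv ℝ (fderiv ℝ h) (x : E)‖)

/-- A `J`-holomorphic disc in `D`: a map from the unit disc `Δ ⊂ ℂ` to `D` satisfying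
`Df(ζ) ∘ J_st = J(f ζ) ∘ Df(ζ)`. -/
def IsJDisc (J : F → F →L[ℝ] F) (D : Set F) (f : ℂ → F) : Prop :=
  MapsTo f (ball (0 : ℂ) 1) D ∧
  ∀ ζ ∈ ball (0 : ℂ) 1, DifferentiableAt ℝ f ζ ∧
    (fderiv ℝ f ζ).comp (Jst ℂ) = (J (f ζ)).comp (fderiv ℝ f ζ)

/-- The Kobayashi–Royden infinitesimal pseudometric of `(D, J)`. -/
def kobayashiMetric (J : F → F →L[ℝ] F) (D : Set F) (p : F) (v : F) : ℝ :=
  sInf {α : ℝ | 0 < α ∧ ∃ f : ℂ → F, IsJDisc J D f ∧ f 0 = p ∧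
    fderiv ℝ f 0 1 = α⁻¹ • v}

/-- The integrated Kobayashi pseudodistance of `(D, J)`. -/
def kobayashiDist (J : F → F →L[ℝ] F) (D : Set F) (p q : F) : ℝ :=
  sInf {d : ℝ | ∃ γ : ℝ → F, ContDiffOn ℝ 1 γ (Icc 0 1) ∧ MapsTo γ (Icc 0 1) D ∧
    γ 0 = p ∧ γ 1 = q ∧ d = ∫ t in (0:ℝ)..1, kobayashiMetric J D (γ t) (deriv γ t)}

/-- `f` is a smooth diffeomorphism from `s` onto `t` with inverse `g`. -/
def IsDiffeoOn (f : E → F) (g : F → E) (s : Set E) (t : Set F) : Prop :=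
  ContDiffOn ℝ (⊤ : ℕ∞) f s ∧ ContDiffOn ℝ (⊤ : ℕ∞) g t ∧ MapsTo f s t ∧ MapsTo g t s ∧
  (∀ x ∈ s, g (f x) = x) ∧ (∀ y ∈ t, f (g y) = y)

/-- The Laplacian of a real function on `ℂ ≅ ℝ²`. -/
def lapR (g : ℂ → ℝ) (ζ : ℂ) : ℝ :=
  fderiv ℝ (fun w => fderiv ℝ g w 1) ζ 1
    + fderiv ℝ (fun w => fderiv ℝ g w Complex.I) ζ Complex.I

/-- The Wirtinger derivative `∂g/∂ζ`. -/
def wirtingerD (g : ℂ → ℂ) (ζ : ℂ) : ℂ :=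
  (fderiv ℝ g ζ 1 - Complex.I * fderiv ℝ g ζ Complex.I) / 2

/-- The Wirtinger derivative `∂g/∂ζ̄`. -/
def wirtingerDbar (g : ℂ → ℂ) (ζ : ℂ) : ℂ :=
  (fderiv ℝ g ζ 1 + Complex.I * fderiv ℝ g ζ Complex.I) / 2

/-- The coordinates of a point of `ℂ²`. -/
def coord2 (z : ℂ × ℂ) : Fin 2 → ℂ := ![z.1, z.2]

abbrev E2 := EuclideanSpace ℂ (Fin 2)

section Nemytskii

variable {K A G : Type} [TopologicalSpace K] [CompactSpace K]
  [NormedAddCommGroup A] [NormedSpace ℝ A] [NormedAddCommGroup G] [NormedSpace ℝ G]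

/-- Pointwise evaluation of a continuous family of operators on a continuous family of vectors. -/
def contApply (K A G : Type) [TopologicalSpace K] [CompactSpace K]
    [NormedAddCommGroup A] [NormedSpace ℝ A] [NormedAddCommGroup G] [NormedSpace ℝ G] :
    C(K, A →L[ℝ] G) →L[ℝ] C(K, A) →L[ℝ] C(K, G) :=
  LinearMap.mkContinuous₂
    (LinearMap.mk₂ ℝ (fun (c : C(K, A →L[ℝ] G)) (a : C(K, A)) =>
        (⟨fun x => c x (a x), by fun_prop⟩ : C(K, G)))
      (fun _ _ _ => by ext; simp) (fun _ _ _ => by ext; simp)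
      (fun _ _ _ => by ext; simp) (fun _ _ _ => by ext; simp)) 1
    (fun c a => by
      rw [one_mul]
      refine (ContinuousMap.norm_le _ (by positivity)).2 fun x => ?_
      exact (c x).le_of_opNorm_le_of_le (c.norm_coe_le_norm x) (a.norm_coe_le_norm x))

@[simp] lemma contApply_apply (c : C(K, A →L[ℝ] G)) (a : C(K, A)) (x : K) :
    contApply K A G c a x = c x (a x) := rfl

/-- Superposition by a map `M`; it is the zero map when `M` is not continuous. -/
def superpose (M : A → G) (φ : C(K, A)) : C(K, G) :=
  open Classical in if h : Continuous M then ⟨fun x => M (φ x), h.comp φ.continuous⟩ else 0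

omit [CompactSpace K] [NormedSpace ℝ A] [NormedSpace ℝ G] in
lemma superpose_apply {M : A → G} (h : Continuous M) (φ : C(K, A)) (x : K) :
    superpose M φ x = M (φ x) := by
  simp [superpose, h]

lemma hasFDerivAt_superpose {M : A → G} (hM : ContDiff ℝ 1 M) (φ : C(K, A)) :
    HasFDerivAt (superpose M : C(K, A) → C(K, G))
      (contApply K A G (superpose (fderiv ℝ M) φ)) φ := by
  have hM' : Continuous (fderiv ℝ M) := hM.continuous_fderiv one_ne_zero
  rw [hasFDerivAt_iff_isLittleO_nhds_zero, isLittleO_iff]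
  intro ε hε
  have hc : IsCompact (range φ) := isCompact_range φ.continuous
  have hu := hc.uniformContinuousAt_of_continuousAt (fderiv ℝ M)
    (fun a _ => hM'.continuousAt) (Metric.dist_mem_uniformity hε)
  obtain ⟨δ, hδ, hδ'⟩ := Metric.mem_uniformity_dist.1 hu
  filter_upwards [Metric.ball_mem_nhds (0 : C(K, A)) hδ] with h hh
  refine (ContinuousMap.norm_le _ (by positivity)).2 fun x => ?_
  have hhx : ‖h x‖ < δ := (h.norm_coe_le_norm x).trans_lt (by simpa using hh)
  simp only [ContinuousMap.sub_apply, superpose_apply hM.continuous, contApply_apply,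
    superpose_apply hM', ContinuousMap.add_apply]
  have := (convex_ball (φ x) δ).norm_image_sub_le_of_norm_hasFDerivWithin_le' (𝕜 := ℝ)
    (f := M) (f' := fderiv ℝ M) (φ := fderiv ℝ M (φ x)) (C := ε) (x := φ x) (y := φ x + h x)
    (fun y _ => ((hM.differentiable one_ne_zero) y).hasFDerivAt.hasFDerivWithinAt)
    (fun y hy => by
      have := hδ' (a := φ x) (b := y) (by rw [dist_comm]; exact hy) ⟨x, rfl⟩
      rw [← dist_eq_norm, dist_comm]
      exact le_of_lt this)
    (mem_ball_self hδ) (by simpa using hhx)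
  simp only [add_sub_cancel_left] at this
  exact this.trans (by gcongr; exact h.norm_coe_le_norm x)

lemma contDiff_superpose_nat (n : ℕ) : ∀ {G : Type} [NormedAddCommGroup G] [NormedSpace ℝ G]
    {M : A → G}, ContDiff ℝ (⊤ : ℕ∞) M →
      ContDiff ℝ n (superpose M : C(K, A) → C(K, G)) := by
  induction n with
  | zero =>
    intro G _ _ M hM
    refine contDiff_zero.2 (continuous_iff_continuousAt.2 fun φ => ?_)
    exact (hasFDerivAt_superpose (hM.of_le (by exact_mod_cast le_top)) φ).continuousAt
  | succ n ih =>
    intro G _ _ M hM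
    have h1 : ∀ φ : C(K, A), HasFDerivAt (superpose M : C(K, A) → C(K, G))
        (contApply K A G (superpose (fderiv ℝ M) φ)) φ :=
      hasFDerivAt_superpose (hM.of_le (by exact_mod_cast le_top))
    refine contDiff_succ_iff_hasFDerivAt.2 ⟨_, ?_, h1⟩
    exact (contApply K A G).contDiff.comp (ih (hM.fderiv_right (m := (⊤ : ℕ∞)) (by simp)))

lemma contDiff_superpose {M : A → G} (hM : ContDiff ℝ (⊤ : ℕ∞) M) :
    ContDiff ℝ (⊤ : ℕ∞) (superpose M : C(K, A) → C(K, G)) :=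
  contDiff_infty.2 fun n => contDiff_superpose_nat n hM

end Nemytskii

section Torus

open MeasureTheory UnitAddTorus
open scoped ComplexConjugate

/-- The two-dimensional torus `(ℝ / ℤ)²`. -/
abbrev Tor : Type := UnitAddTorus (Fin 2)

/-- Normalized Haar measure on the torus. -/
def torMeasure : Measure Tor := Measure.addHaarMeasure ⊤

instance : Measure.IsAddHaarMeasure torMeasure :=
  inferInstanceAs (Measure.IsAddHaarMeasure (Measure.addHaarMeasure ⊤))

instance : IsProbabilityMeasure torMeasure :=
  ⟨by
    simpa [torMeasure] using Measure.addHaarMeasure_self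
      (K₀ := (⊤ : TopologicalSpace.PositiveCompacts Tor))⟩

/-- The covering map from the plane to the torus. -/
def toTor (a : Fin 2 → ℝ) : Tor := fun i => (a i : UnitAddCircle)

lemma toTor_add (a b : Fin 2 → ℝ) : toTor (a + b) = toTor a + toTor b := by
  ext i; simp [toTor]

@[simp] lemma toTor_zero : toTor 0 = 0 := by
  ext i; simp [toTor]

lemma mFourier_toTor (k : Fin 2 → ℤ) (a : Fin 2 → ℝ) :
    mFourier k (toTor a) = Complex.exp (2 * Real.pi * Complex.I * (k 0 * a 0 + k 1 * a 1)) := by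
  have : mFourier k (toTor a) = fourier (k 0) (a 0 : UnitAddCircle) *
      fourier (k 1) (a 1 : UnitAddCircle) := by
    simp [mFourier, toTor, Fin.prod_univ_two]
  rw [this, fourier_coe_apply, fourier_coe_apply, ← Complex.exp_add]
  congr 1
  push_cast
  ring

lemma mFourier_add_arg (k : Fin 2 → ℤ) (x y : Tor) :
    mFourier k (x + y) = mFourier k x * mFourier k y := by
  simp [mFourier, Fin.prod_univ_two, fourier_apply, smul_add, AddCircle.toCircle_add]
  ring

@[simp] lemma mFourier_zero_arg (k : Fin 2 → ℤ) : mFourier k (0 : Tor) = 1 := by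
  simp [mFourier]

lemma norm_mFourier_apply (k : Fin 2 → ℤ) (x : Tor) : ‖mFourier k x‖ = 1 := by
  simp only [mFourier, fourier_apply, ContinuousMap.coe_mk, norm_prod, Circle.norm_coe,
    Finset.prod_const_one]

lemma conj_mFourier_mul_self (k : Fin 2 → ℤ) (x : Tor) :
    conj (mFourier k x) * mFourier k x = 1 := by
  rw [mul_comm, Complex.mul_conj, Complex.normSq_eq_norm_sq, norm_mFourier_apply]
  simp

lemma exists_mFourier_ne_one {k : Fin 2 → ℤ} (hk : k ≠ 0) : ∃ a : Tor, mFourier k a ≠ 1 := by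
  obtain ⟨i, hi⟩ := Function.ne_iff.1 hk
  have hi' : (k i : ℂ) ≠ 0 := by exact_mod_cast hi
  refine ⟨toTor (Pi.single i (1 / (2 * k i : ℝ))), ?_⟩
  have : (2 * Real.pi * Complex.I * (k 0 * ((Pi.single i (1 / (2 * k i : ℝ)) : Fin 2 → ℝ) 0 : ℝ)
      + k 1 * ((Pi.single i (1 / (2 * k i : ℝ)) : Fin 2 → ℝ) 1 : ℝ)) : ℂ)
      = Real.pi * Complex.I := by
    fin_cases i
    · simp at hi' ⊢; field_simp
    · simp at hi' ⊢; field_simp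
  rw [mFourier_toTor, this, Complex.exp_pi_mul_I]
  norm_num

lemma integral_mFourier (k : Fin 2 → ℤ) :
    ∫ x, mFourier k x ∂torMeasure = if k = 0 then 1 else 0 := by
  split_ifs with hk
  · subst hk
    simp [mFourier_zero]
  · obtain ⟨a, ha⟩ := exists_mFourier_ne_one hk
    have h := integral_add_right_eq_self (μ := torMeasure) (fun x => mFourier k x) a
    simp only [mFourier_add_arg] at h
    rw [integral_mul_const] at h
    have : (∫ x, mFourier k x ∂torMeasure) * (mFourier k a - 1) = 0 := by
      rw [mul_sub, h]; ring
    exact (mul_eq_zero.1 this).resolve_right (sub_ne_zero.2 ha)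

lemma integral_conj_mFourier_mul (k l : Fin 2 → ℤ) :
    ∫ x, conj (mFourier k x) * mFourier l x ∂torMeasure = if k = l then 1 else 0 := by
  have : ∀ x : Tor, conj (mFourier k x) * mFourier l x = mFourier (l - k) x := fun x => by
    rw [← mFourier_neg, ← mFourier_add, neg_add_eq_sub]
  simp only [this, integral_mFourier, sub_eq_zero, eq_comm]

variable {H : Type} [NormedAddCommGroup H] [InnerProductSpace ℂ H]

/-- The elementary wave `x ↦ e_k(x) • v`. -/
def wave (k : Fin 2 → ℤ) (v : H) : C(Tor, H) := ⟨fun x => mFourier k x • v, by fun_prop⟩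

@[simp] lemma wave_apply (k : Fin 2 → ℤ) (v : H) (x : Tor) : wave k v x = mFourier k x • v := rfl

/-- The Fourier coefficients of a continuous function on the torus. -/
def fCoeff (q : C(Tor, H)) (k : Fin 2 → ℤ) : H :=
  ∫ x, conj (mFourier k x) • q x ∂torMeasure

lemma integrable_tor {G : Type} [NormedAddCommGroup G] [NormedSpace ℝ G] {q : Tor → G}
    (hq : Continuous q) : Integrable q torMeasure :=
  hq.integrable_of_hasCompactSupport (HasCompactSupport.of_compactSpace q)

lemma fCoeff_add (q q' : C(Tor, H)) (k) : fCoeff (q + q') k = fCoeff q k + fCoeff q' k := by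
  simp only [fCoeff, ContinuousMap.add_apply, smul_add]
  exact integral_add (integrable_tor (by fun_prop)) (integrable_tor (by fun_prop))

lemma fCoeff_smul (c : ℂ) (q : C(Tor, H)) (k) : fCoeff (c • q) k = c • fCoeff q k := by
  simp only [fCoeff, ContinuousMap.smul_apply, smul_comm _ c]
  exact integral_smul c _

lemma norm_fCoeff_le (q : C(Tor, H)) (k) : ‖fCoeff q k‖ ≤ ‖q‖ := by
  refine (norm_integral_le_of_norm_le_const (C := ‖q‖) (ae_of_all _ fun x => ?_)).trans (by simp)
  rw [norm_smul, RCLike.norm_conj, norm_mFourier_apply, one_mul]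
  exact q.norm_coe_le_norm x

/-- The Fourier coefficient as a continuous linear functional. -/
def fCoeffCLM (H : Type) [NormedAddCommGroup H] [InnerProductSpace ℂ H] (k : Fin 2 → ℤ) :
    C(Tor, H) →L[ℝ] H :=
  LinearMap.mkContinuous
    { toFun := fun q => fCoeff q k
      map_add' := fun q q' => fCoeff_add q q' k
      map_smul' := fun c q => by
        have : c • q = (c : ℂ) • q := by ext; simp
        rw [this, fCoeff_smul]; simp } 1 (fun q => by simpa using norm_fCoeff_le q k)

@[simp] lemma fCoeffCLM_apply (q : C(Tor, H)) (k) : fCoeffCLM H k q = fCoeff q k := rfl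

lemma fCoeff_wave [CompleteSpace H] (k l : Fin 2 → ℤ) (v : H) :
    fCoeff (wave l v) k = if k = l then v else 0 := by
  simp only [fCoeff, wave_apply, smul_smul]
  rw [integral_smul_const, integral_conj_mFourier_mul]
  split_ifs <;> simp

/-- Translation of functions on the torus. -/
def transl {G : Type} [NormedAddCommGroup G] (a : Tor) (q : C(Tor, G)) : C(Tor, G) :=
  q.comp ⟨fun x => x + a, by fun_prop⟩

@[simp] lemma transl_apply {G : Type} [NormedAddCommGroup G] (a : Tor) (q : C(Tor, G)) (x : Tor) :
    transl a q x = q (x + a) := rfl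

lemma fCoeff_transl (a : Tor) (q : C(Tor, H)) (k) :
    fCoeff (transl a q) k = mFourier k a • fCoeff q k := by
  have h := integral_add_right_eq_self (μ := torMeasure) (fun x => conj (mFourier k x) • q x) a
  simp only [fCoeff, transl_apply]
  rw [← h, ← integral_smul]
  congr 1
  ext x
  have h1 := conj_mFourier_mul_self k a
  have : mFourier k a * conj (mFourier k (x + a)) = conj (mFourier k x) := by
    rw [mFourier_add_arg, map_mul]
    linear_combination conj (mFourier k x) * h1
  rw [smul_smul, this]

lemma eq_zero_of_fCoeff_eq_zero [CompleteSpace H] {q : C(Tor, H)} (h : ∀ k, fCoeff q k = 0) :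
    q = 0 := by
  have key : ∀ v : H, ∀ P : C(Tor, ℂ), ∫ x, conj (P x) * inner ℂ v (q x) ∂torMeasure = 0 := by
    intro v
    set g : C(Tor, ℂ) := ⟨fun x => inner ℂ v (q x), by fun_prop⟩ with hg
    have hgx : ∀ x, g x = inner ℂ v (q x) := fun x => rfl
    let Λ : C(Tor, ℂ) →+ ℂ :=
      { toFun := fun P => ∫ x, conj (P x) * g x ∂torMeasure
        map_zero' := by simp
        map_add' := fun P P' => by
          rw [← integral_add (integrable_tor (by fun_prop)) (integrable_tor (by fun_prop))]
          congr 1; ext x; simp; ring }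
    have hΛ : ∀ P, Λ P = ∫ x, conj (P x) * g x ∂torMeasure := fun P => rfl
    have hclosed : IsClosed {P : C(Tor, ℂ) | Λ P = 0} := by
      refine isClosed_eq (AddMonoidHomClass.continuous_of_bound Λ ‖g‖ fun P => ?_)
        continuous_const
      refine (norm_integral_le_of_norm_le_const (C := ‖g‖ * ‖P‖) (ae_of_all _ fun x => ?_)).trans
        (by simp)
      rw [norm_mul, RCLike.norm_conj, mul_comm]
      exact mul_le_mul (g.norm_coe_le_norm x) (P.norm_coe_le_norm x) (norm_nonneg _)
        (norm_nonneg _)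
    intro P
    have hP : P ∈ (Submodule.span ℂ (range <| mFourier (d := Fin 2))).topologicalClosure := by
      rw [span_mFourier_closure_eq_top]; trivial
    refine closure_minimal (t := {P : C(Tor, ℂ) | Λ P = 0}) (fun P hP => ?_) hclosed
      (by rwa [← SetLike.mem_coe, Submodule.topologicalClosure_coe] at hP)
    induction hP using Submodule.span_induction with
    | mem P hP =>
      obtain ⟨k, rfl⟩ := hP
      have hk : ∫ x, inner ℂ v (conj (mFourier k x) • q x) ∂torMeasure = inner ℂ v (fCoeff q k) :=
        integral_inner (integrable_tor (by fun_prop)) v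
      simp only [inner_smul_right, h k, inner_zero_right] at hk
      exact hk
    | zero => exact map_zero Λ
    | add P P' _ _ h1 h2 =>
      simp only [mem_ofPred_eq] at h1 h2 ⊢
      rw [map_add, h1, h2, add_zero]
    | smul c P _ h1 =>
      simp only [mem_ofPred_eq, hΛ] at h1 ⊢
      simp only [ContinuousMap.smul_apply, smul_eq_mul, map_mul, mul_assoc]
      rw [integral_const_mul, h1, mul_zero]
  ext x
  have h0 := key (q x) ⟨fun y => inner ℂ (q x) (q y), by fun_prop⟩
  simp only [ContinuousMap.coe_mk] at h0
  have h1 : ∀ y, conj (inner ℂ (q x) (q y)) * inner ℂ (q x) (q y)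
      = ((‖(inner ℂ (q x) (q y) : ℂ)‖ ^ 2 : ℝ) : ℂ) := fun y => by
    rw [mul_comm, Complex.mul_conj, Complex.normSq_eq_norm_sq]
  simp only [h1] at h0
  rw [integral_complex_ofReal] at h0
  have h2 : ∫ y, ‖(inner ℂ (q x) (q y) : ℂ)‖ ^ 2 ∂torMeasure = 0 := by exact_mod_cast h0
  by_contra hne
  have h3 := Continuous.integral_pos_of_hasCompactSupport_nonneg_nonzero (μ := torMeasure)
    (f := fun y => ‖(inner ℂ (q x) (q y) : ℂ)‖ ^ 2) (by fun_prop)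
    (HasCompactSupport.of_compactSpace _) (fun y => by positivity) (x := x)
    (by simpa using hne)
  exact h3.ne' h2

end Torus

section Synthesis

open MeasureTheory UnitAddTorus
open scoped ComplexConjugate ENNReal

/-- Square-integrable functions on the torus. -/
abbrev L2 (G : Type) [NormedAddCommGroup G] : Type := Lp G 2 torMeasure

/-- The class in `L²` of a continuous function. -/
def toL2 (G : Type) [NormedAddCommGroup G] [NormedSpace ℝ G] : C(Tor, G) →L[ℝ] L2 G :=
  ContinuousMap.toLp 2 torMeasure ℝ

lemma coeFn_toL2 {G : Type} [NormedAddCommGroup G] [NormedSpace ℝ G] (q : C(Tor, G)) :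
    toL2 G q =ᵐ[torMeasure] q := ContinuousMap.coeFn_toLp _ _

/-- Square-summable families of Fourier coefficients. -/
abbrev CoeffSeq (H : Type) [NormedAddCommGroup H] : Type := lp (fun _ : Fin 2 → ℤ => H) 2

variable {H : Type} [NormedAddCommGroup H] [InnerProductSpace ℂ H]

lemma inner_toL2 (q q' : C(Tor, H)) :
    inner ℂ (toL2 H q) (toL2 H q') = ∫ x, inner ℂ (q x) (q' x) ∂torMeasure := by
  rw [L2.inner_def]
  refine integral_congr_ae ?_
  filter_upwards [coeFn_toL2 q, coeFn_toL2 q'] with x h1 h2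
  rw [h1, h2]

lemma inner_toL2_wave [CompleteSpace H] (k l : Fin 2 → ℤ) (v w : H) :
    inner ℂ (toL2 H (wave k v)) (toL2 H (wave l w)) = if k = l then inner ℂ v w else 0 := by
  rw [inner_toL2]
  simp only [wave_apply, inner_smul_left, inner_smul_right, ← mul_assoc]
  rw [integral_mul_const]
  simp only [mul_comm (mFourier l _)]
  rw [integral_conj_mFourier_mul]
  split_ifs <;> simp

/-- The isometric embedding of `H` in `L²` by waves of frequency `k`. -/
def waveIso (H : Type) [NormedAddCommGroup H] [InnerProductSpace ℂ H] [CompleteSpace H]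
    (k : Fin 2 → ℤ) : H →ₗᵢ[ℂ] L2 H where
  toFun v := toL2 H (wave k v)
  map_add' v w := by
    rw [← map_add]; congr 1; ext x; simp
  map_smul' c v := by
    have : wave k (c • v) = c • wave k v := by ext x; simp [smul_comm c]
    rw [this]
    exact (ContinuousMap.toLp 2 torMeasure ℂ).map_smul c (wave k v)
  norm_map' v := by
    have h := inner_toL2_wave k k v v
    rw [if_pos rfl, inner_self_eq_norm_sq_to_K, inner_self_eq_norm_sq_to_K] at h
    have h2 : ‖toL2 H (wave k v)‖ ^ 2 = ‖v‖ ^ 2 := by exact_mod_cast h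
    exact (sq_eq_sq₀ (norm_nonneg _) (norm_nonneg _)).1 h2

lemma waveIso_apply [CompleteSpace H] (k) (v : H) : waveIso H k v = toL2 H (wave k v) := rfl

lemma orthogonalFamily_waveIso [CompleteSpace H] :
    OrthogonalFamily ℂ (fun _ : Fin 2 → ℤ => H) (waveIso H) := fun k l hkl v w => by
  rw [waveIso_apply, waveIso_apply, inner_toL2_wave, if_neg hkl]

/-- Fourier synthesis. -/
def synthC (H : Type) [NormedAddCommGroup H] [InnerProductSpace ℂ H] [CompleteSpace H] :
    CoeffSeq H →L[ℂ] L2 H :=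
  (orthogonalFamily_waveIso (H := H)).linearIsometry.toContinuousLinearMap

/-- Fourier synthesis as a real-linear map. -/
def synth (H : Type) [NormedAddCommGroup H] [InnerProductSpace ℂ H] [CompleteSpace H] :
    CoeffSeq H →L[ℝ] L2 H :=
  (synthC H).restrictScalars ℝ

/-- Fourier analysis, the adjoint of synthesis. -/
def analysis (H : Type) [NormedAddCommGroup H] [InnerProductSpace ℂ H] [CompleteSpace H] :
    L2 H →L[ℝ] CoeffSeq H :=
  (ContinuousLinearMap.adjoint (synthC H)).restrictScalars ℝ

lemma synth_single [CompleteSpace H] (k : Fin 2 → ℤ) (v : H) :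
    synth H (lp.single 2 k v) = toL2 H (wave k v) :=
  (orthogonalFamily_waveIso (H := H)).linearIsometry_apply_single v

lemma analysis_toL2 [CompleteSpace H] (q : C(Tor, H)) (k : Fin 2 → ℤ) :
    (analysis H (toL2 H q) : CoeffSeq H) k = fCoeff q k := by
  refine ext_inner_left ℂ fun v => ?_
  have h1 : inner ℂ v ((analysis H (toL2 H q) : CoeffSeq H) k)
      = inner ℂ (lp.single 2 k v : CoeffSeq H) (analysis H (toL2 H q)) :=
    (lp.inner_single_left (𝕜 := ℂ) (G := fun _ : Fin 2 → ℤ => H) k v _).symm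
  have h2 : inner ℂ (lp.single 2 k v : CoeffSeq H) (analysis H (toL2 H q))
      = inner ℂ (synth H (lp.single 2 k v)) (toL2 H q) :=
    ContinuousLinearMap.adjoint_inner_right (synthC H) _ _
  rw [h1, h2, synth_single, inner_toL2, fCoeff, ← integral_inner (integrable_tor (by fun_prop)) v]
  simp [inner_smul_right, mul_comm]

variable {A G : Type} [NormedAddCommGroup A] [NormedSpace ℝ A]
  [NormedAddCommGroup G] [NormedSpace ℝ G]

/-- Multiplication of square-integrable functions by continuous operator fields. -/
def mulL2 (A G : Type) [NormedAddCommGroup A] [NormedSpace ℝ A]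
    [NormedAddCommGroup G] [NormedSpace ℝ G] : C(Tor, A →L[ℝ] G) →L[ℝ] L2 A →L[ℝ] L2 G :=
  ((ContinuousLinearMap.id ℝ (A →L[ℝ] G)).holderL torMeasure ∞ 2 2).comp
    (ContinuousMap.toLp ∞ torMeasure ℝ)

lemma mulL2_toL2 (c : C(Tor, A →L[ℝ] G)) (a : C(Tor, A)) :
    mulL2 A G c (toL2 A a) = toL2 G (contApply Tor A G c a) := by
  refine Lp.ext ?_
  have h := ContinuousLinearMap.coeFn_holder (r := 2) (ContinuousLinearMap.id ℝ (A →L[ℝ] G))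
    (ContinuousMap.toLp ∞ torMeasure ℝ c) (toL2 A a)
  filter_upwards [h, coeFn_toL2 a, coeFn_toL2 (contApply Tor A G c a),
    ContinuousMap.coeFn_toLp (p := ∞) (𝕜 := ℝ) torMeasure c] with x h1 h2 h3 h4
  rw [h3]
  refine h1.trans ?_
  rw [h2, h4]
  rfl

end Synthesis

section OrbitDerivative

open MeasureTheory UnitAddTorus

variable {A B G : Type} [NormedAddCommGroup A] [NormedSpace ℝ A]
  [NormedAddCommGroup B] [NormedSpace ℝ B] [NormedAddCommGroup G] [NormedSpace ℝ G]
  {H : Type} [NormedAddCommGroup H] [InnerProductSpace ℂ H]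

/-- `q'` is the derivative of `q` in the `i`-th coordinate direction, uniformly on the torus. -/
def HasTorDeriv (i : Fin 2) (q q' : C(Tor, G)) : Prop :=
  HasDerivAt (fun t : ℝ => transl (toTor (Pi.single i t)) q) q' 0

/-- The Fourier symbol of the `i`-th partial derivative. -/
def freq (i : Fin 2) (k : Fin 2 → ℤ) : ℂ := 2 * Real.pi * Complex.I * k i

lemma mFourier_toTor_single (i : Fin 2) (k : Fin 2 → ℤ) (t : ℝ) :
    mFourier k (toTor (Pi.single i t)) = Complex.exp (freq i k * t) := by
  rw [mFourier_toTor, freq]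
  congr 1
  fin_cases i <;> simp <;> ring

lemma hasDerivAt_mFourier_toTor_single (i : Fin 2) (k : Fin 2 → ℤ) :
    HasDerivAt (fun t : ℝ => mFourier k (toTor (Pi.single i t))) (freq i k) 0 := by
  simp only [mFourier_toTor_single]
  have h : HasDerivAt (fun t : ℝ => freq i k * (t : ℂ)) (freq i k) 0 := by
    simpa using (Complex.ofRealCLM.hasDerivAt (x := (0 : ℝ))).const_mul (freq i k)
  simpa using h.cexp

omit [NormedSpace ℝ G] in
lemma transl_single_zero (i : Fin 2) (q : C(Tor, G)) :
    transl (toTor (Pi.single i (0 : ℝ))) q = q := by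
  ext x; simp

namespace HasTorDeriv

variable {i : Fin 2}

lemma fCoeff_eq {q q' : C(Tor, H)} (h : HasTorDeriv i q q') (k : Fin 2 → ℤ) :
    fCoeff q' k = freq i k • fCoeff q k := by
  have h1 : HasDerivAt (fun t : ℝ => fCoeff (transl (toTor (Pi.single i t)) q) k)
      (fCoeff q' k) 0 := (fCoeffCLM H k).hasFDerivAt.comp_hasDerivAt 0 h
  simp only [fCoeff_transl] at h1
  exact h1.unique ((hasDerivAt_mFourier_toTor_single i k).smul_const _)

lemma const (g : G) : HasTorDeriv i (ContinuousMap.const Tor g) 0 := by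
  have : (fun t : ℝ => transl (toTor (Pi.single i t)) (ContinuousMap.const Tor g))
      = fun _ => ContinuousMap.const Tor g := by
    ext t x; simp
  rw [HasTorDeriv, this]
  exact hasDerivAt_const _ _

lemma add {p p' q q' : C(Tor, G)} (hp : HasTorDeriv i p p') (hq : HasTorDeriv i q q') :
    HasTorDeriv i (p + q) (p' + q') := HasDerivAt.add hp hq

lemma sum {ι : Type} (s : Finset ι) {q q' : ι → C(Tor, G)}
    (h : ∀ j ∈ s, HasTorDeriv i (q j) (q' j)) :
    HasTorDeriv i (∑ j ∈ s, q j) (∑ j ∈ s, q' j) := by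
  have e : (fun t : ℝ => transl (toTor (Pi.single i t)) (∑ j ∈ s, q j))
      = fun t : ℝ => ∑ j ∈ s, transl (toTor (Pi.single i t)) (q j) := by
    ext t x; simp
  rw [HasTorDeriv, e]
  exact HasDerivAt.fun_sum h

lemma comp (T : A →L[ℝ] G) {q q' : C(Tor, A)} (h : HasTorDeriv i q q') :
    HasTorDeriv i (T.compLeftContinuous ℝ Tor q) (T.compLeftContinuous ℝ Tor q') :=
  (T.compLeftContinuous ℝ Tor).hasFDerivAt.comp_hasDerivAt 0 h

lemma apply {c c' : C(Tor, A →L[ℝ] G)} {a a' : C(Tor, A)} (hc : HasTorDeriv i c c')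
    (ha : HasTorDeriv i a a') :
    HasTorDeriv i (contApply Tor A G c a) (contApply Tor A G c' a + contApply Tor A G c a') := by
  have h := (contApply Tor A G).hasFDerivAt_of_bilinear
    (HasDerivAt.hasFDerivAt hc) (HasDerivAt.hasFDerivAt ha)
  have h' := h.hasDerivAt
  simp only [transl_single_zero] at h'
  refine h'.congr_deriv ?_
  rw [add_apply, add_comm]
  simp

lemma superpose {M : A → G} (hM : ContDiff ℝ 1 M) {q q' : C(Tor, A)} (h : HasTorDeriv i q q') :
    HasTorDeriv i (superpose M q) (contApply Tor A G (superpose (fderiv ℝ M) q) q') := by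
  have h1 := hasFDerivAt_superpose hM (transl (toTor (Pi.single i (0 : ℝ))) q)
  have h2 := h1.comp_hasDerivAt (0 : ℝ) h
  rw [transl_single_zero] at h2
  have e : (fun t : ℝ => transl (toTor (Pi.single i t)) (_root_.superpose M q))
      = _root_.superpose M ∘ fun t : ℝ => transl (toTor (Pi.single i t)) q := by
    ext t x; simp [superpose_apply hM.continuous]
  rw [HasTorDeriv, e]
  exact h2

lemma wave (k : Fin 2 → ℤ) (v : H) : HasTorDeriv i (_root_.wave k v) (_root_.wave k (freq i k • v)) := by
  have h1 : (fun t : ℝ => transl (toTor (Pi.single i t)) (_root_.wave k v))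
      = fun t : ℝ => mFourier k (toTor (Pi.single i t)) • _root_.wave k v := by
    ext t x; simp [mFourier_add_arg, smul_smul, mul_comm]
  have h2 : _root_.wave k (freq i k • v) = freq i k • _root_.wave k v := by
    ext x; simp [smul_smul, mul_comm]
  rw [HasTorDeriv, h1, h2]
  exact (hasDerivAt_mFourier_toTor_single i k).smul_const (_root_.wave k v)

end HasTorDeriv

end OrbitDerivative

section Leibniz

variable {A B G : Type} [NormedAddCommGroup A] [NormedSpace ℝ A]
  [NormedAddCommGroup B] [NormedSpace ℝ B] [NormedAddCommGroup G] [NormedSpace ℝ G]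

lemma ContDiff.fderiv_top {f : A → G} (hf : ContDiff ℝ (⊤ : ℕ∞) f) :
    ContDiff ℝ (⊤ : ℕ∞) (fderiv ℝ f) := hf.fderiv_right (m := (⊤ : ℕ∞)) (by simp)

/-- The pointwise action of a bilinear map on continuous functions. -/
def contBil {K A B G : Type} [TopologicalSpace K] [CompactSpace K]
    [NormedAddCommGroup A] [NormedSpace ℝ A] [NormedAddCommGroup B] [NormedSpace ℝ B]
    [NormedAddCommGroup G] [NormedSpace ℝ G] (T : A →L[ℝ] B →L[ℝ] G) :
    C(K, A) →L[ℝ] C(K, B) →L[ℝ] C(K, G) :=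
  (contApply K B G).comp (T.compLeftContinuous ℝ K)

lemma contBil_apply {K : Type} [TopologicalSpace K] [CompactSpace K] (T : A →L[ℝ] B →L[ℝ] G)
    (c : C(K, A)) (b : C(K, B)) (x : K) : contBil T c b x = T (c x) (b x) := rfl

/-- Swapping the arguments of a bilinear map. -/
def flipCLM (A B G : Type) [NormedAddCommGroup A] [NormedSpace ℝ A]
    [NormedAddCommGroup B] [NormedSpace ℝ B] [NormedAddCommGroup G] [NormedSpace ℝ G] :
    (A →L[ℝ] B →L[ℝ] G) →L[ℝ] (B →L[ℝ] A →L[ℝ] G) :=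
  (ContinuousLinearMap.flipₗᵢ ℝ A B G : (A →L[ℝ] B →L[ℝ] G) →L[ℝ] (B →L[ℝ] A →L[ℝ] G))

lemma flipCLM_apply (T : A →L[ℝ] B →L[ℝ] G) (b : B) (a : A) :
    flipCLM A B G T b a = T a b := rfl

/-- The expansion of `(1 + ∂₀)(1 + ∂₁)(M(φ) h)` by the Leibniz rule, as a square-integrable
function, where `φ₀ φ₁ φ₀₁` and `h₀ h₁ h₀₁` stand for the derivatives of `φ` and `h`. -/
def leibniz (M : A → B →L[ℝ] G) (φ φ₀ φ₁ : C(Tor, A)) (φ₀₁ : L2 A) (h : C(Tor, B))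
    (h₀ h₁ h₀₁ : L2 B) : L2 G :=
  mulL2 B G (superpose M φ) (toL2 B h + h₀ + h₁ + h₀₁)
    + mulL2 B G (contApply Tor A (B →L[ℝ] G) (superpose (fderiv ℝ M) φ) φ₀) (toL2 B h + h₁)
    + mulL2 B G (contApply Tor A (B →L[ℝ] G) (superpose (fderiv ℝ M) φ) φ₁) (toL2 B h + h₀)
    + mulL2 B G (contApply Tor A (B →L[ℝ] G) (contApply Tor A (A →L[ℝ] B →L[ℝ] G)
        (superpose (fderiv ℝ (fderiv ℝ M)) φ) φ₁) φ₀) (toL2 B h)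
    + mulL2 A G (contBil (flipCLM A B G) (superpose (fderiv ℝ M) φ) h) φ₀₁

lemma contDiff_bilinear {P Q R Θ : Type} [NormedAddCommGroup P] [NormedSpace ℝ P]
    [NormedAddCommGroup Q] [NormedSpace ℝ Q] [NormedAddCommGroup R] [NormedSpace ℝ R]
    [NormedAddCommGroup Θ] [NormedSpace ℝ Θ] (T : P →L[ℝ] Q →L[ℝ] R) {f : Θ → P} {g : Θ → Q}
    (hf : ContDiff ℝ (⊤ : ℕ∞) f) (hg : ContDiff ℝ (⊤ : ℕ∞) g) :
    ContDiff ℝ (⊤ : ℕ∞) fun θ => T (f θ) (g θ) := (T.contDiff.comp hf).clm_apply hg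

lemma contDiff_contApply {K Θ : Type} [TopologicalSpace K] [CompactSpace K]
    [NormedAddCommGroup Θ] [NormedSpace ℝ Θ] {c : Θ → C(K, A →L[ℝ] G)} {a : Θ → C(K, A)}
    (hc : ContDiff ℝ (⊤ : ℕ∞) c) (ha : ContDiff ℝ (⊤ : ℕ∞) a) :
    ContDiff ℝ (⊤ : ℕ∞) fun θ => contApply K A G (c θ) (a θ) :=
  contDiff_bilinear (contApply K A G) hc ha

lemma contDiff_contBil {K Θ : Type} [TopologicalSpace K] [CompactSpace K]
    [NormedAddCommGroup Θ] [NormedSpace ℝ Θ] (T : A →L[ℝ] B →L[ℝ] G) {c : Θ → C(K, A)}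
    {b : Θ → C(K, B)} (hc : ContDiff ℝ (⊤ : ℕ∞) c) (hb : ContDiff ℝ (⊤ : ℕ∞) b) :
    ContDiff ℝ (⊤ : ℕ∞) fun θ => contBil T (c θ) (b θ) :=
  contDiff_bilinear (contBil T) hc hb

lemma contDiff_leibniz {M : A → B →L[ℝ] G} (hM : ContDiff ℝ (⊤ : ℕ∞) M)
    {Θ : Type} [NormedAddCommGroup Θ] [NormedSpace ℝ Θ]
    {φ φ₀ φ₁ : Θ → C(Tor, A)} {φ₀₁ : Θ → L2 A} {h : Θ → C(Tor, B)} {h₀ h₁ h₀₁ : Θ → L2 B}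
    (dφ : ContDiff ℝ (⊤ : ℕ∞) φ) (dφ₀ : ContDiff ℝ (⊤ : ℕ∞) φ₀) (dφ₁ : ContDiff ℝ (⊤ : ℕ∞) φ₁)
    (dφ₀₁ : ContDiff ℝ (⊤ : ℕ∞) φ₀₁) (dh : ContDiff ℝ (⊤ : ℕ∞) h) (dh₀ : ContDiff ℝ (⊤ : ℕ∞) h₀)
    (dh₁ : ContDiff ℝ (⊤ : ℕ∞) h₁) (dh₀₁ : ContDiff ℝ (⊤ : ℕ∞) h₀₁) :
    ContDiff ℝ (⊤ : ℕ∞) fun θ =>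
      leibniz M (φ θ) (φ₀ θ) (φ₁ θ) (φ₀₁ θ) (h θ) (h₀ θ) (h₁ θ) (h₀₁ θ) := by
  have s0 := (contDiff_superpose (K := Tor) hM).comp dφ
  have s1 := (contDiff_superpose (K := Tor) hM.fderiv_top).comp dφ
  have s2 := (contDiff_superpose (K := Tor) hM.fderiv_top.fderiv_top).comp dφ
  have dh' : ContDiff ℝ (⊤ : ℕ∞) fun θ => toL2 B (h θ) := (toL2 B).contDiff.comp dh
  have t0 := contDiff_bilinear (mulL2 B G) s0 (((dh'.add dh₀).add dh₁).add dh₀₁)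
  have t1 := contDiff_bilinear (mulL2 B G)
    (contDiff_contApply s1 dφ₀) (dh'.add dh₁)
  have t2 := contDiff_bilinear (mulL2 B G)
    (contDiff_contApply s1 dφ₁) (dh'.add dh₀)
  have t3 := contDiff_bilinear (mulL2 B G) (contDiff_contApply (contDiff_contApply s2 dφ₁) dφ₀) dh'
  have t4 := contDiff_bilinear (mulL2 A G) (contDiff_contBil (flipCLM A B G) s1 dh) dφ₀₁
  exact (((t0.add t1).add t2).add t3).add t4

lemma exists_leibniz_eq {M : A → B →L[ℝ] G} (hM : ContDiff ℝ (⊤ : ℕ∞) M)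
    {φ φ₀ φ₁ φ₀₁ : C(Tor, A)} {h h₀ h₁ h₀₁ : C(Tor, B)}
    (dφ₀ : HasTorDeriv 0 φ φ₀) (dφ₁ : HasTorDeriv 1 φ φ₁) (dφ₀₁ : HasTorDeriv 1 φ₀ φ₀₁)
    (dh₀ : HasTorDeriv 0 h h₀) (dh₁ : HasTorDeriv 1 h h₁) (dh₀₁ : HasTorDeriv 1 h₀ h₀₁) :
    ∃ u₀ u₁ u₀₁ : C(Tor, G), HasTorDeriv 0 (contApply Tor B G (superpose M φ) h) u₀ ∧
      HasTorDeriv 1 (contApply Tor B G (superpose M φ) h) u₁ ∧ HasTorDeriv 1 u₀ u₀₁ ∧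
      leibniz M φ φ₀ φ₁ (toL2 A φ₀₁) h (toL2 B h₀) (toL2 B h₁) (toL2 B h₀₁) =
        toL2 G (contApply Tor B G (superpose M φ) h + u₀ + u₁ + u₀₁) := by
  have o1 : (1 : WithTop ℕ∞) ≤ (⊤ : ℕ∞) := by exact_mod_cast le_top
  have c0 := dφ₀.superpose (hM.of_le o1)
  have c1 := dφ₁.superpose (hM.of_le o1)
  have c01 := (dφ₁.superpose (hM.fderiv_top.of_le o1)).apply dφ₀₁
  refine ⟨_, _, _, c0.apply dh₀, c1.apply dh₁, (c01.apply dh₁).add (c1.apply dh₀₁), ?_⟩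
  have hf : contApply Tor A G (contBil (flipCLM A B G) (superpose (fderiv ℝ M) φ) h) φ₀₁ =
      contApply Tor B G (contApply Tor A (B →L[ℝ] G) (superpose (fderiv ℝ M) φ) φ₀₁) h := by
    ext x
    simp only [contApply_apply, contBil_apply, flipCLM_apply]
  simp only [leibniz, ← map_add, mulL2_toL2, hf]
  congr 1
  simp only [map_add, add_apply]
  abel

lemma analysis_leibniz {H : Type} [NormedAddCommGroup H] [InnerProductSpace ℂ H] [CompleteSpace H]
    {M : A → B →L[ℝ] H} (hM : ContDiff ℝ (⊤ : ℕ∞) M)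
    {φ φ₀ φ₁ φ₀₁ : C(Tor, A)} {h h₀ h₁ h₀₁ : C(Tor, B)}
    (dφ₀ : HasTorDeriv 0 φ φ₀) (dφ₁ : HasTorDeriv 1 φ φ₁) (dφ₀₁ : HasTorDeriv 1 φ₀ φ₀₁)
    (dh₀ : HasTorDeriv 0 h h₀) (dh₁ : HasTorDeriv 1 h h₁) (dh₀₁ : HasTorDeriv 1 h₀ h₀₁)
    (k : Fin 2 → ℤ) :
    (analysis H (leibniz M φ φ₀ φ₁ (toL2 A φ₀₁) h (toL2 B h₀) (toL2 B h₁) (toL2 B h₀₁)) :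
        CoeffSeq H) k
      = ((1 + freq 0 k) * (1 + freq 1 k)) • fCoeff (contApply Tor B H (superpose M φ) h) k := by
  obtain ⟨u₀, u₁, u₀₁, d0, d1, d01, e⟩ := exists_leibniz_eq hM dφ₀ dφ₁ dφ₀₁ dh₀ dh₁ dh₀₁
  rw [e, analysis_toL2, fCoeff_add, fCoeff_add, fCoeff_add, d01.fCoeff_eq, d1.fCoeff_eq,
    d0.fCoeff_eq]
  module

end Leibniz

section Multipliers

open UnitAddTorus

variable {H : Type} [NormedAddCommGroup H] [InnerProductSpace ℂ H]

lemma norm_wave_le (k : Fin 2 → ℤ) (v : H) : ‖wave k v‖ ≤ ‖v‖ := by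
  refine (ContinuousMap.norm_le _ (norm_nonneg _)).2 fun x => ?_
  rw [wave_apply, norm_smul, norm_mFourier_apply, one_mul]

lemma wave_add (k : Fin 2 → ℤ) (v w : H) : wave k (v + w) = wave k v + wave k w := by
  ext x; simp

lemma wave_smul (k : Fin 2 → ℤ) (c : ℝ) (v : H) : wave k (c • v) = c • wave k v := by
  ext x; exact smul_comm _ _ _

lemma CoeffSeq.summable_sq {G : Type} [NormedAddCommGroup G] (m : CoeffSeq G) :
    Summable fun k => ‖m k‖ ^ (2 : ℝ) := by
  have h := (lp.memℓp m).summable (by norm_num)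
  rwa [ENNReal.toReal_ofNat] at h

omit [InnerProductSpace ℂ H] in
lemma CoeffSeq.summable_mul (m : CoeffSeq ℂ) (w : CoeffSeq H) :
    Summable fun k => ‖m k‖ * ‖w k‖ :=
  Real.summable_mul_of_Lp_Lq_of_nonneg Real.HolderConjugate.two_two (fun _ => norm_nonneg _)
    (fun _ => norm_nonneg _) m.summable_sq w.summable_sq

omit [InnerProductSpace ℂ H] in
lemma CoeffSeq.tsum_mul_le (m : CoeffSeq ℂ) (w : CoeffSeq H) :
    ∑' k, ‖m k‖ * ‖w k‖ ≤ ‖m‖ * ‖w‖ := by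
  rw [lp.norm_eq_tsum_rpow (by norm_num) m, lp.norm_eq_tsum_rpow (by norm_num) w,
    ENNReal.toReal_ofNat]
  exact Real.inner_le_Lp_mul_Lq_tsum_of_nonneg Real.HolderConjugate.two_two
    (fun _ => norm_nonneg _) (fun _ => norm_nonneg _) m.summable_sq w.summable_sq

lemma summable_wave [CompleteSpace H] (m : CoeffSeq ℂ) (w : CoeffSeq H) :
    Summable fun k => wave k (m k • w k) :=
  Summable.of_norm_bounded (m.summable_mul w) fun k => by
    simpa [norm_smul] using norm_wave_le k (m k • w k)

/-- The continuous function with Fourier coefficients `m k • w k`. -/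
def sumWave [CompleteSpace H] (m : CoeffSeq ℂ) : CoeffSeq H →L[ℝ] C(Tor, H) :=
  LinearMap.mkContinuous
    { toFun := fun w => ∑' k, wave k (m k • w k)
      map_add' := fun w w' => by
        rw [← (summable_wave m w).tsum_add (summable_wave m w')]
        simp [wave_add]
      map_smul' := fun c w => by
        rw [RingHom.id_apply, ← (summable_wave m w).tsum_const_smul c]
        simp [wave_smul, smul_comm _ c] } ‖m‖
    fun w => by
      refine le_trans ?_ (m.tsum_mul_le w)
      exact tsum_of_norm_bounded (m.summable_mul w).hasSum fun k => by
        simpa [norm_smul] using norm_wave_le k (m k • w k)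

lemma sumWave_eq [CompleteSpace H] (m : CoeffSeq ℂ) (w : CoeffSeq H) :
    sumWave m w = ∑' k, wave k (m k • w k) := rfl

lemma fCoeff_sumWave [CompleteSpace H] (m : CoeffSeq ℂ) (w : CoeffSeq H) (k : Fin 2 → ℤ) :
    fCoeff (sumWave m w) k = m k • w k := by
  rw [sumWave_eq, ← fCoeffCLM_apply, ContinuousLinearMap.map_tsum _ (summable_wave m w),
    tsum_eq_single k]
  · simp [fCoeff_wave]
  · intro l hl
    simp [fCoeff_wave, hl.symm]

/-- The diagonal operator on coefficient sequences with symbol `m`. -/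
def diag (H : Type) [NormedAddCommGroup H] [InnerProductSpace ℂ H] (m : (Fin 2 → ℤ) → ℂ)
    (hm : ∀ k, ‖m k‖ ≤ 1) : CoeffSeq H →L[ℝ] CoeffSeq H :=
  have hb (w : CoeffSeq H) (k) : ‖m k • w k‖ ≤ ‖w k‖ := by
    rw [norm_smul]
    exact mul_le_of_le_one_left (norm_nonneg _) (hm k)
  LinearMap.mkContinuous
    { toFun := fun w => ⟨fun k => m k • w k, (lp.memℓp w).mono' (hb w)⟩
      map_add' := fun w w' => by ext k; exact smul_add _ _ _
      map_smul' := fun c w => by ext k; exact smul_comm _ _ _ } 1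
    fun w => by
      rw [one_mul]
      exact lp.norm_mono (by norm_num) (hb w)

@[simp] lemma diag_apply (m : (Fin 2 → ℤ) → ℂ) (hm : ∀ k, ‖m k‖ ≤ 1) (w : CoeffSeq H)
    (k : Fin 2 → ℤ) : diag H m hm w k = m k • w k := rfl

/-- The trigonometric polynomial with frequencies in `s` and coefficients `m k • w k`. -/
def trigPoly (m : (Fin 2 → ℤ) → ℂ) (s : Finset (Fin 2 → ℤ)) (w : (Fin 2 → ℤ) → H) : C(Tor, H) :=
  ∑ k ∈ s, wave k (m k • w k)

lemma hasTorDeriv_trigPoly (i : Fin 2) (m : (Fin 2 → ℤ) → ℂ) (s : Finset (Fin 2 → ℤ))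
    (w : (Fin 2 → ℤ) → H) :
    HasTorDeriv i (trigPoly m s w) (trigPoly (fun k => freq i k * m k) s w) := by
  refine HasTorDeriv.sum s fun k _ => ?_
  rw [mul_smul]
  exact HasTorDeriv.wave k _

/-- The truncation of a coefficient sequence to a finite set. -/
def truncSeq (s : Finset (Fin 2 → ℤ)) (w : (Fin 2 → ℤ) → H) : CoeffSeq H :=
  ∑ k ∈ s, lp.single 2 k (w k)

omit [InnerProductSpace ℂ H] in
lemma tendsto_truncSeq (w : CoeffSeq H) :
    Tendsto (fun s => truncSeq s w) atTop (𝓝 w) :=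
  lp.hasSum_single (by norm_num) w

lemma sumWave_truncSeq [CompleteSpace H] (m : CoeffSeq ℂ) (s : Finset (Fin 2 → ℤ))
    (w : (Fin 2 → ℤ) → H) : sumWave m (truncSeq s w) = trigPoly m s w := by
  rw [truncSeq, map_sum, trigPoly]
  refine Finset.sum_congr rfl fun k _ => ?_
  rw [sumWave_eq, tsum_eq_single k]
  · simp
  · intro l hl
    ext x
    simp [hl]

lemma synth_diag_truncSeq [CompleteSpace H] (m : (Fin 2 → ℤ) → ℂ) (hm : ∀ k, ‖m k‖ ≤ 1)
    (s : Finset (Fin 2 → ℤ)) (w : (Fin 2 → ℤ) → H) :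
    synth H (diag H m hm (truncSeq s w)) = toL2 H (trigPoly m s w) := by
  have : diag H m hm (truncSeq s w) = ∑ k ∈ s, lp.single 2 k (m k • w k) := by
    rw [truncSeq, map_sum]
    refine Finset.sum_congr rfl fun k _ => ?_
    ext l
    rw [diag_apply]
    by_cases h : l = k
    · subst h; simp
    · simp [h]
  rw [this, map_sum, trigPoly, map_sum]
  exact Finset.sum_congr rfl fun k _ => synth_single k _

end Multipliers

section Symbols

/-- The Fourier symbol of `(1 + ∂₀)(1 + ∂₁)`. -/
def weight (k : Fin 2 → ℤ) : ℂ := (1 + freq 0 k) * (1 + freq 1 k)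

/-- The Fourier symbol of the inverse of `∂₁ - i ∂₀`, with value `0` at the zero frequency. -/
def cauchySymbol (k : Fin 2 → ℤ) : ℂ := (freq 1 k - Complex.I * freq 0 k)⁻¹

lemma norm_sq_one_add_freq (i : Fin 2) (k : Fin 2 → ℤ) :
    ‖1 + freq i k‖ ^ 2 = 1 + (2 * Real.pi * k i) ^ 2 := by
  rw [← Complex.normSq_eq_norm_sq, Complex.normSq_apply]
  simp [freq]
  ring

lemma norm_freq (i : Fin 2) (k : Fin 2 → ℤ) : ‖freq i k‖ = |2 * Real.pi * k i| := by
  simp [freq, abs_mul, abs_of_pos Real.pi_pos]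

lemma one_le_norm_one_add_freq (i : Fin 2) (k : Fin 2 → ℤ) : 1 ≤ ‖1 + freq i k‖ := by
  have := norm_sq_one_add_freq i k
  nlinarith [norm_nonneg (1 + freq i k), sq_nonneg (2 * Real.pi * k i)]

lemma norm_freq_le (i : Fin 2) (k : Fin 2 → ℤ) : ‖freq i k‖ ≤ ‖1 + freq i k‖ := by
  rw [norm_freq]
  refine abs_le_of_sq_le_sq ?_ (norm_nonneg _)
  rw [norm_sq_one_add_freq]
  linarith

lemma norm_sq_cauchy (k : Fin 2 → ℤ) : ‖freq 1 k - Complex.I * freq 0 k‖ ^ 2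
    = (2 * Real.pi * k 0) ^ 2 + (2 * Real.pi * k 1) ^ 2 := by
  rw [← Complex.normSq_eq_norm_sq, Complex.normSq_apply]
  simp [freq]
  ring

lemma norm_freq_le_cauchy (i : Fin 2) (k : Fin 2 → ℤ) :
    ‖freq i k‖ ≤ ‖freq 1 k - Complex.I * freq 0 k‖ := by
  rw [norm_freq]
  refine abs_le_of_sq_le_sq ?_ (norm_nonneg _)
  rw [norm_sq_cauchy]
  fin_cases i <;> simp <;> positivity

lemma norm_freq_mul_cauchySymbol_le (i : Fin 2) (k : Fin 2 → ℤ) :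
    ‖freq i k * cauchySymbol k‖ ≤ 1 := by
  rw [cauchySymbol, norm_mul, norm_inv, ← div_eq_mul_inv]
  exact div_le_one_of_le₀ (norm_freq_le_cauchy i k) (norm_nonneg _)

lemma freq_zero_freq (i : Fin 2) : freq i 0 = 0 := by simp [freq]

lemma cauchy_ne_zero {k : Fin 2 → ℤ} (hk : k ≠ 0) : freq 1 k - Complex.I * freq 0 k ≠ 0 := by
  intro h
  have h2 := norm_sq_cauchy k
  rw [h, norm_zero] at h2
  apply hk
  have hp := Real.pi_pos
  have h0 : (2 * Real.pi * k 0) ^ 2 = 0 := by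
    nlinarith [sq_nonneg (2 * Real.pi * k 0), sq_nonneg (2 * Real.pi * k 1)]
  have h1 : (2 * Real.pi * k 1) ^ 2 = 0 := by
    nlinarith [sq_nonneg (2 * Real.pi * k 0), sq_nonneg (2 * Real.pi * k 1)]
  ext i
  fin_cases i
  · simpa [hp.ne'] using h0
  · simpa [hp.ne'] using h1

lemma norm_cauchySymbol_le (k : Fin 2 → ℤ) : ‖cauchySymbol k‖ ≤ 1 := by
  by_cases hk : k = 0
  · simp [hk, cauchySymbol, freq_zero_freq]
  · obtain ⟨i, hi⟩ := Function.ne_iff.1 hk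
    rw [cauchySymbol, norm_inv]
    refine inv_le_one_of_one_le₀ (le_trans ?_ (norm_freq_le_cauchy i k))
    have h1 : (1 : ℝ) ≤ |(k i : ℝ)| := by
      rw [← Int.cast_abs]; exact_mod_cast Int.one_le_abs hi
    rw [norm_freq, abs_mul, abs_of_pos Real.two_pi_pos]
    nlinarith [Real.pi_gt_three]

lemma weight_ne_zero (k : Fin 2 → ℤ) : weight k ≠ 0 := by
  have h (i) : 1 + freq i k ≠ 0 := fun h => by
    have := one_le_norm_one_add_freq i k
    rw [h, norm_zero] at this
    linarith
  exact mul_ne_zero (h 0) (h 1)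

lemma summable_weight : Summable fun k => ‖(weight k)⁻¹‖ ^ (2 : ℝ) := by
  have h1 : Summable fun n : ℤ => (1 + (2 * Real.pi * n) ^ 2)⁻¹ := by
    refine Summable.of_norm_bounded_eventually (Real.summable_one_div_int_pow.2 one_lt_two) ?_
    filter_upwards [(Set.finite_singleton (0 : ℤ)).compl_mem_cofinite] with n hn
    have hn' : (n : ℝ) ≠ 0 := by exact_mod_cast hn
    rw [Real.norm_of_nonneg (by positivity), one_div]
    refine inv_anti₀ (by positivity) ?_
    nlinarith [Real.pi_gt_three, sq_nonneg (n : ℝ), sq_nonneg (2 * Real.pi - 1)]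
  have h2 := h1.mul_of_nonneg h1 (fun _ => by positivity) (fun _ => by positivity)
  refine ((finTwoArrowEquiv ℤ).summable_iff.2 h2).congr fun k => ?_
  change (1 + (2 * Real.pi * k 0) ^ 2)⁻¹ * (1 + (2 * Real.pi * k 1) ^ 2)⁻¹ = _
  rw [← norm_sq_one_add_freq, ← norm_sq_one_add_freq, Real.rpow_two, weight, norm_inv, norm_mul,
    inv_pow, mul_pow, mul_inv]

/-- A sequence bounded by the inverse of `weight` is square-summable. -/
def weightSeq (m : (Fin 2 → ℤ) → ℂ) (hm : ∀ k, ‖m k‖ ≤ 1) : CoeffSeq ℂ :=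
  ⟨fun k => m k * (weight k)⁻¹, by
    refine Memℓp.mono' (g := fun k => (weight k)⁻¹) (memℓp_gen ?_) fun k => ?_
    · rw [ENNReal.toReal_ofNat]; exact summable_weight
    · rw [norm_mul]; exact mul_le_of_le_one_left (norm_nonneg _) (hm k)⟩

lemma weightSeq_apply (m : (Fin 2 → ℤ) → ℂ) (hm : ∀ k, ‖m k‖ ≤ 1) (k) :
  weightSeq m hm k = m k * (weight k)⁻¹ := rfl

/-- The Fourier symbol of the solution operator of `(1 + ∂₀)(1 + ∂₁)(∂₁ - i ∂₀) y = w`. -/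
def solSymbol (k : Fin 2 → ℤ) : ℂ := cauchySymbol k * (weight k)⁻¹

lemma norm_freq_mul_inv_le (i : Fin 2) (k : Fin 2 → ℤ) : ‖freq i k * (1 + freq i k)⁻¹‖ ≤ 1 := by
  rw [norm_mul, norm_inv, ← div_eq_mul_inv]
  exact div_le_one_of_le₀ (norm_freq_le i k) (norm_nonneg _)

lemma norm_inv_one_add_freq_le (i : Fin 2) (k : Fin 2 → ℤ) : ‖(1 + freq i k)⁻¹‖ ≤ 1 := by
  rw [norm_inv]
  exact inv_le_one_of_one_le₀ (one_le_norm_one_add_freq i k)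

lemma norm_mul_le_one {a b : ℂ} (ha : ‖a‖ ≤ 1) (hb : ‖b‖ ≤ 1) : ‖a * b‖ ≤ 1 := by
  rw [norm_mul]; exact mul_le_one₀ ha (norm_nonneg _) hb

lemma norm_symbol_zero_zero_le (k : Fin 2 → ℤ) : ‖freq 0 k * (freq 0 k * solSymbol k)‖ ≤ 1 := by
  have : freq 0 k * (freq 0 k * solSymbol k) = freq 0 k * cauchySymbol k *
      ((freq 0 k * (1 + freq 0 k)⁻¹) * (1 + freq 1 k)⁻¹) := by
    rw [solSymbol, weight, mul_inv]; ring
  rw [this]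
  exact norm_mul_le_one (norm_freq_mul_cauchySymbol_le 0 k)
    (norm_mul_le_one (norm_freq_mul_inv_le 0 k) (norm_inv_one_add_freq_le 1 k))

lemma norm_symbol_one_zero_le (k : Fin 2 → ℤ) : ‖freq 1 k * (freq 0 k * solSymbol k)‖ ≤ 1 := by
  have : freq 1 k * (freq 0 k * solSymbol k) = freq 1 k * cauchySymbol k *
      ((freq 0 k * (1 + freq 0 k)⁻¹) * (1 + freq 1 k)⁻¹) := by
    rw [solSymbol, weight, mul_inv]; ring
  rw [this]
  exact norm_mul_le_one (norm_freq_mul_cauchySymbol_le 1 k)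
    (norm_mul_le_one (norm_freq_mul_inv_le 0 k) (norm_inv_one_add_freq_le 1 k))

lemma norm_symbol_one_zero_zero_le (k : Fin 2 → ℤ) :
    ‖freq 1 k * (freq 0 k * (freq 0 k * solSymbol k))‖ ≤ 1 := by
  have : freq 1 k * (freq 0 k * (freq 0 k * solSymbol k)) = freq 0 k * cauchySymbol k *
      ((freq 0 k * (1 + freq 0 k)⁻¹) * (freq 1 k * (1 + freq 1 k)⁻¹)) := by
    rw [solSymbol, weight, mul_inv]; ring
  rw [this]
  exact norm_mul_le_one (norm_freq_mul_cauchySymbol_le 0 k)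
    (norm_mul_le_one (norm_freq_mul_inv_le 0 k) (norm_freq_mul_inv_le 1 k))

end Symbols

section Residual

open UnitAddTorus MeasureTheory

variable {R H : Type} [NormedAddCommGroup R] [NormedSpace ℝ R]
  [NormedAddCommGroup H] [InnerProductSpace ℂ H]

/-- `wave` as a continuous linear map. -/
def waveCLM (H : Type) [NormedAddCommGroup H] [InnerProductSpace ℂ H] (k : Fin 2 → ℤ) :
    H →L[ℝ] C(Tor, H) :=
  LinearMap.mkContinuous { toFun := wave k, map_add' := wave_add k, map_smul' := wave_smul k } 1
    fun v => by rw [one_mul]; exact norm_wave_le k v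

lemma waveCLM_apply (k : Fin 2 → ℤ) (v : H) : waveCLM H k v = wave k v := rfl

/-- Constant functions on the torus. -/
def constCLM (R : Type) [NormedAddCommGroup R] [NormedSpace ℝ R] : R →L[ℝ] C(Tor, R) :=
  LinearMap.mkContinuous
    { toFun := ContinuousMap.const Tor
      map_add' := fun _ _ => by ext; simp
      map_smul' := fun _ _ => by ext; simp } 1
    fun v => by
      rw [one_mul]
      exact (ContinuousMap.norm_le _ (norm_nonneg _)).2 fun _ => le_rfl

lemma constCLM_apply (r : R) : constCLM R r = ContinuousMap.const Tor r := rfl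

/-- The first coordinate frequency. -/
def freqFst : Fin 2 → ℤ := Pi.single 0 1

/-- The second coordinate frequency. -/
def freqSnd : Fin 2 → ℤ := Pi.single 1 1

/-- The map `x ↦ (z₁ exp(2 π i x₀), z₂ exp(2 π i x₁), r)` on the torus. -/
def carrier (R : Type) [NormedAddCommGroup R] [NormedSpace ℝ R] :
    ℂ × ℂ × R →L[ℝ] C(Tor, ℂ × ℂ × R) :=
  ((ContinuousLinearMap.inl ℝ ℂ (ℂ × R)).compLeftContinuous ℝ Tor).comp
      ((waveCLM ℂ freqFst).comp (ContinuousLinearMap.fst ℝ ℂ (ℂ × R)))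
    + ((((ContinuousLinearMap.inr ℝ ℂ (ℂ × R)).comp
          (ContinuousLinearMap.inl ℝ ℂ R)).compLeftContinuous ℝ Tor).comp
      ((waveCLM ℂ freqSnd).comp ((ContinuousLinearMap.fst ℝ ℂ R).comp
        (ContinuousLinearMap.snd ℝ ℂ (ℂ × R))))
    + (constCLM (ℂ × ℂ × R)).comp (((ContinuousLinearMap.inr ℝ ℂ (ℂ × R)).comp
        (ContinuousLinearMap.inr ℝ ℂ R)).comp ((ContinuousLinearMap.snd ℝ ℂ R).comp
        (ContinuousLinearMap.snd ℝ ℂ (ℂ × R)))))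

lemma carrier_apply (a : ℂ × ℂ × R) (x : Tor) :
    carrier R a x = (mFourier freqFst x * a.1, mFourier freqSnd x * a.2.1, a.2.2) := by
  simp [carrier, waveCLM_apply, constCLM_apply]

/-- The derivative of `carrier` in the first coordinate. -/
def carrier₀ (R : Type) [NormedAddCommGroup R] [NormedSpace ℝ R] :
    ℂ × ℂ × R →L[ℝ] C(Tor, ℂ × ℂ × R) :=
  ((ContinuousLinearMap.inl ℝ ℂ (ℂ × R)).compLeftContinuous ℝ Tor).comp
      ((waveCLM ℂ freqFst).comp ((freq 0 freqFst • ContinuousLinearMap.id ℝ ℂ).comp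
        (ContinuousLinearMap.fst ℝ ℂ (ℂ × R))))

/-- The derivative of `carrier` in the second coordinate. -/
def carrier₁ (R : Type) [NormedAddCommGroup R] [NormedSpace ℝ R] :
    ℂ × ℂ × R →L[ℝ] C(Tor, ℂ × ℂ × R) :=
  (((ContinuousLinearMap.inr ℝ ℂ (ℂ × R)).comp
          (ContinuousLinearMap.inl ℝ ℂ R)).compLeftContinuous ℝ Tor).comp
      ((waveCLM ℂ freqSnd).comp ((freq 1 freqSnd • ContinuousLinearMap.id ℝ ℂ).comp
        ((ContinuousLinearMap.fst ℝ ℂ R).comp (ContinuousLinearMap.snd ℝ ℂ (ℂ × R)))))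

lemma freq_one_freqFst : freq 1 freqFst = 0 := by simp [freq, freqFst]

lemma freq_zero_freqSnd : freq 0 freqSnd = 0 := by simp [freq, freqSnd]

lemma wave_zero (k : Fin 2 → ℤ) : wave k (0 : H) = 0 := by ext; simp

lemma hasTorDeriv_carrier₀ (a : ℂ × ℂ × R) : HasTorDeriv 0 (carrier R a) (carrier₀ R a) := by
  have h1 := (HasTorDeriv.wave (i := 0) freqFst a.1).comp (ContinuousLinearMap.inl ℝ ℂ (ℂ × R))
  have h2 := (HasTorDeriv.wave (i := 0) freqSnd a.2.1).comp
    ((ContinuousLinearMap.inr ℝ ℂ (ℂ × R)).comp (ContinuousLinearMap.inl ℝ ℂ R))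
  have h3 := HasTorDeriv.const (i := 0) ((0, 0, a.2.2) : ℂ × ℂ × R)
  have h := h1.add (h2.add h3)
  rw [freq_zero_freqSnd, zero_smul, wave_zero, map_zero, add_zero, add_zero] at h
  exact h

lemma hasTorDeriv_carrier₁ (a : ℂ × ℂ × R) : HasTorDeriv 1 (carrier R a) (carrier₁ R a) := by
  have h1 := (HasTorDeriv.wave (i := 1) freqFst a.1).comp (ContinuousLinearMap.inl ℝ ℂ (ℂ × R))
  have h2 := (HasTorDeriv.wave (i := 1) freqSnd a.2.1).comp
    ((ContinuousLinearMap.inr ℝ ℂ (ℂ × R)).comp (ContinuousLinearMap.inl ℝ ℂ R))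
  have h3 := HasTorDeriv.const (i := 1) ((0, 0, a.2.2) : ℂ × ℂ × R)
  have h := h1.add (h2.add h3)
  rw [freq_one_freqFst, zero_smul, wave_zero, map_zero, add_zero, zero_add] at h
  exact h

lemma hasTorDeriv_carrier₀₁ (a : ℂ × ℂ × R) : HasTorDeriv 1 (carrier₀ R a) 0 := by
  have h1 := (HasTorDeriv.wave (i := 1) freqFst (freq 0 freqFst • a.1)).comp
    (ContinuousLinearMap.inl ℝ ℂ (ℂ × R))
  rw [freq_one_freqFst, zero_smul, wave_zero, map_zero] at h1
  exact h1

lemma compLpL_toL2 {A G : Type} [NormedAddCommGroup A] [NormedSpace ℝ A]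
    [NormedAddCommGroup G] [NormedSpace ℝ G] (T : A →L[ℝ] G) (q : C(Tor, A)) :
    T.compLpL 2 torMeasure (toL2 A q) = toL2 G (T.compLeftContinuous ℝ Tor q) := by
  refine Lp.ext ?_
  filter_upwards [T.coeFn_compLpL (p := 2) (toL2 A q), coeFn_toL2 q,
    coeFn_toL2 (T.compLeftContinuous ℝ Tor q)] with x h1 h2 h3
  rw [h1, h2, h3]
  rfl

variable [CompleteSpace H]

/-- The doubly periodic solution `y` of `(1 + ∂₀)(1 + ∂₁)(∂₁ - i ∂₀) y = w` without zero mode. -/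
def sol (H : Type) [NormedAddCommGroup H] [InnerProductSpace ℂ H] [CompleteSpace H] :
    CoeffSeq H →L[ℝ] C(Tor, H) :=
  sumWave (weightSeq cauchySymbol norm_cauchySymbol_le)

/-- The derivative of `sol` in the `i`-th coordinate. -/
def solDeriv (H : Type) [NormedAddCommGroup H] [InnerProductSpace ℂ H] [CompleteSpace H]
    (i : Fin 2) : CoeffSeq H →L[ℝ] C(Tor, H) :=
  sumWave (weightSeq (fun k => freq i k * cauchySymbol k) (norm_freq_mul_cauchySymbol_le i))

lemma sol_truncSeq (s : Finset (Fin 2 → ℤ)) (w : (Fin 2 → ℤ) → H) :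
    sol H (truncSeq s w) = trigPoly solSymbol s w := sumWave_truncSeq _ s w

lemma solDeriv_truncSeq (i : Fin 2) (s : Finset (Fin 2 → ℤ)) (w : (Fin 2 → ℤ) → H) :
    solDeriv H i (truncSeq s w) = trigPoly (fun k => freq i k * solSymbol k) s w := by
  rw [solDeriv, sumWave_truncSeq]
  congr 1
  ext k
  rw [weightSeq_apply, solSymbol, mul_assoc]

/-- The coefficients of `(1 + ∂₀)(1 + ∂₁) u`, where `u = M(carrier a + j (sol w)) (v + ∂₀ sol w)`,
computed through the Leibniz rule. -/
def nlResidual (M : ℂ × ℂ × R → H →L[ℝ] H) (j : H →L[ℝ] ℂ × ℂ × R) (a : ℂ × ℂ × R) (v : H)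
    (w : CoeffSeq H) : CoeffSeq H :=
  analysis H (leibniz M (carrier R a + j.compLeftContinuous ℝ Tor (sol H w))
    (carrier₀ R a + j.compLeftContinuous ℝ Tor (solDeriv H 0 w))
    (carrier₁ R a + j.compLeftContinuous ℝ Tor (solDeriv H 1 w))
    (j.compLpL 2 torMeasure (synth H (diag H _ norm_symbol_one_zero_le w)))
    (constCLM H v + solDeriv H 0 w)
    (synth H (diag H _ norm_symbol_zero_zero_le w))
    (synth H (diag H _ norm_symbol_one_zero_le w))
    (synth H (diag H _ norm_symbol_one_zero_zero_le w)))

/-- The nonlinear term `M(carrier a + j (sol w)) (v + ∂₀ sol w)`. -/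
def nlSource (M : ℂ × ℂ × R → H →L[ℝ] H) (j : H →L[ℝ] ℂ × ℂ × R) (a : ℂ × ℂ × R) (v : H)
    (w : CoeffSeq H) : C(Tor, H) :=
  contApply Tor H H (superpose M (carrier R a + j.compLeftContinuous ℝ Tor (sol H w)))
    (constCLM H v + solDeriv H 0 w)

lemma contDiff_nlResidual {M : ℂ × ℂ × R → H →L[ℝ] H} (hM : ContDiff ℝ (⊤ : ℕ∞) M)
    (j : H →L[ℝ] ℂ × ℂ × R) {Θ : Type} [NormedAddCommGroup Θ] [NormedSpace ℝ Θ]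
    {a : Θ → ℂ × ℂ × R} {v : Θ → H} {w : Θ → CoeffSeq H} (da : ContDiff ℝ (⊤ : ℕ∞) a)
    (dv : ContDiff ℝ (⊤ : ℕ∞) v) (dw : ContDiff ℝ (⊤ : ℕ∞) w) :
    ContDiff ℝ (⊤ : ℕ∞) fun θ => nlResidual M j (a θ) (v θ) (w θ) := by
  refine (analysis H).contDiff.comp (contDiff_leibniz hM ?_ ?_ ?_ ?_ ?_ ?_ ?_ ?_)
  · exact ((carrier R).contDiff.comp da).add
      ((j.compLeftContinuous ℝ Tor).contDiff.comp ((sol H).contDiff.comp dw))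
  · exact ((carrier₀ R).contDiff.comp da).add
      ((j.compLeftContinuous ℝ Tor).contDiff.comp ((solDeriv H 0).contDiff.comp dw))
  · exact ((carrier₁ R).contDiff.comp da).add
      ((j.compLeftContinuous ℝ Tor).contDiff.comp ((solDeriv H 1).contDiff.comp dw))
  · exact (j.compLpL 2 torMeasure).contDiff.comp
      ((synth H).contDiff.comp ((diag H _ norm_symbol_one_zero_le).contDiff.comp dw))
  · exact ((constCLM H).contDiff.comp dv).add ((solDeriv H 0).contDiff.comp dw)
  · exact (synth H).contDiff.comp ((diag H _ norm_symbol_zero_zero_le).contDiff.comp dw)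
  · exact (synth H).contDiff.comp ((diag H _ norm_symbol_one_zero_le).contDiff.comp dw)
  · exact (synth H).contDiff.comp ((diag H _ norm_symbol_one_zero_zero_le).contDiff.comp dw)

lemma contDiff_nlSource {M : ℂ × ℂ × R → H →L[ℝ] H} (hM : ContDiff ℝ (⊤ : ℕ∞) M)
    (j : H →L[ℝ] ℂ × ℂ × R) {Θ : Type} [NormedAddCommGroup Θ] [NormedSpace ℝ Θ]
    {a : Θ → ℂ × ℂ × R} {v : Θ → H} {w : Θ → CoeffSeq H} (da : ContDiff ℝ (⊤ : ℕ∞) a)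
    (dv : ContDiff ℝ (⊤ : ℕ∞) v) (dw : ContDiff ℝ (⊤ : ℕ∞) w) :
    ContDiff ℝ (⊤ : ℕ∞) fun θ => nlSource M j (a θ) (v θ) (w θ) := by
  refine contDiff_contApply ((contDiff_superpose hM).comp ?_) ?_
  · exact ((carrier R).contDiff.comp da).add
      ((j.compLeftContinuous ℝ Tor).contDiff.comp ((sol H).contDiff.comp dw))
  · exact ((constCLM H).contDiff.comp dv).add ((solDeriv H 0).contDiff.comp dw)

lemma nlResidual_truncSeq {M : ℂ × ℂ × R → H →L[ℝ] H} (hM : ContDiff ℝ (⊤ : ℕ∞) M)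
    (j : H →L[ℝ] ℂ × ℂ × R) (a : ℂ × ℂ × R) (v : H) (s : Finset (Fin 2 → ℤ))
    (w : (Fin 2 → ℤ) → H) (k : Fin 2 → ℤ) :
    nlResidual M j a v (truncSeq s w) k = weight k • fCoeff (nlSource M j a v (truncSeq s w)) k := by
  have y0 := hasTorDeriv_trigPoly 0 solSymbol s w
  have y1 := hasTorDeriv_trigPoly 1 solSymbol s w
  have y01 := hasTorDeriv_trigPoly 1 (fun k => freq 0 k * solSymbol k) s w
  have y00 := hasTorDeriv_trigPoly 0 (fun k => freq 0 k * solSymbol k) s w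
  have y001 := hasTorDeriv_trigPoly 1 (fun k => freq 0 k * (freq 0 k * solSymbol k)) s w
  have dφ₀ := (hasTorDeriv_carrier₀ a).add (y0.comp j)
  have dφ₁ := (hasTorDeriv_carrier₁ a).add (y1.comp j)
  have dφ₀₁ := (hasTorDeriv_carrier₀₁ a).add (y01.comp j)
  have dh₀ := (HasTorDeriv.const (i := 0) v).add y00
  have dh₁ := (HasTorDeriv.const (i := 1) v).add y01
  rw [zero_add] at dh₀ dh₁ dφ₀₁
  rw [nlResidual, nlSource, sol_truncSeq, solDeriv_truncSeq, solDeriv_truncSeq, synth_diag_truncSeq,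
    synth_diag_truncSeq, synth_diag_truncSeq, compLpL_toL2]
  exact analysis_leibniz hM dφ₀ dφ₁ dφ₀₁ dh₀ dh₁ y001 k

lemma nlResidual_apply {M : ℂ × ℂ × R → H →L[ℝ] H} (hM : ContDiff ℝ (⊤ : ℕ∞) M)
    (j : H →L[ℝ] ℂ × ℂ × R) (a : ℂ × ℂ × R) (v : H) (w : CoeffSeq H) (k : Fin 2 → ℤ) :
    nlResidual M j a v w k = weight k • fCoeff (nlSource M j a v w) k := by
  have c₁ : Continuous fun w => nlResidual M j a v w :=
    (contDiff_nlResidual hM j contDiff_const contDiff_const contDiff_id).continuous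
  have c₂ : Continuous fun w => nlSource M j a v w :=
    (contDiff_nlSource hM j contDiff_const contDiff_const contDiff_id).continuous
  have t₁ : Tendsto (fun s => nlResidual M j a v (truncSeq s w) k) atTop
      (𝓝 (nlResidual M j a v w k)) :=
    ((lp.evalCLM ℝ (fun _ : Fin 2 → ℤ => H) 2 k).continuous.comp c₁).continuousAt.tendsto.comp
      (tendsto_truncSeq w)
  have t₂ : Tendsto (fun s => weight k • fCoeff (nlSource M j a v (truncSeq s w)) k) atTop
      (𝓝 (weight k • fCoeff (nlSource M j a v w) k)) :=
    (((fCoeffCLM H k).continuous.comp c₂).const_smul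
      (weight k)).continuousAt.tendsto.comp (tendsto_truncSeq w)
  simp only [nlResidual_truncSeq hM] at t₁
  exact tendsto_nhds_unique t₁ t₂

end Residual

section Orbit

variable {Z P X T : Type} [NormedAddCommGroup Z] [NormedSpace ℝ Z] [CompleteSpace Z]
  [NormedAddCommGroup P] [NormedSpace ℝ P] [CompleteSpace P]
  [NormedAddCommGroup X] [NormedSpace ℝ X] [CompleteSpace X]
  [NormedAddCommGroup T] [NormedSpace ℝ T]

/-- If `w = 𝓕 (z, p, w)` near a point where the derivative of `𝓕` vanishes, then any isometric
motion of `w` that solves the equation along a smooth motion of `z` is smooth. -/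
lemma exists_smooth_orbit {𝓕 : Z × P × X → X} (h𝓕 : ContDiff ℝ (⊤ : ℕ∞) 𝓕) {z₀ : Z} {p₀ : P}
    (hd : HasFDerivAt 𝓕 (0 : Z × P × X →L[ℝ] X) (z₀, p₀, 0)) :
    ∀ᶠ x : P × X in 𝓝 (p₀, 0), ∀ (g : T → Z) (U : T → X), ContDiff ℝ (⊤ : ℕ∞) g → g 0 = z₀ →
      U 0 = x.2 → (∀ a, ‖U a‖ = ‖x.2‖) → (∀ a, 𝓕 (g a, x.1, U a) = U a) →
      ContDiffAt ℝ (⊤ : ℕ∞) U 0 := by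
  have htop : ((⊤ : ℕ∞) : WithTop ℕ∞) ≠ 0 := by simp
  let Φ : Z × P × X → Z × P × X := fun θ => θ - (0, 0, 𝓕 θ)
  have hΦ : ContDiff ℝ (⊤ : ℕ∞) Φ :=
    contDiff_id.sub (contDiff_const.prodMk (contDiff_const.prodMk h𝓕))
  have hΦd : HasFDerivAt Φ ((ContinuousLinearEquiv.refl ℝ (Z × P × X) :
      (Z × P × X) ≃L[ℝ] (Z × P × X)) : Z × P × X →L[ℝ] Z × P × X) (z₀, p₀, 0) := by
    have h := (hasFDerivAt_id (𝕜 := ℝ) ((z₀, p₀, 0) : Z × P × X)).sub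
      ((hasFDerivAt_const (0 : Z) _).prodMk ((hasFDerivAt_const (0 : P) _).prodMk hd))
    refine h.congr_fderiv ?_
    ext <;> simp
  have hs := hΦ.contDiffAt.hasStrictFDerivAt' hΦd htop
  let e := hs.toOpenPartialHomeomorph Φ
  have hN : ∀ᶠ θ in 𝓝 ((z₀, p₀, 0) : Z × P × X), θ ∈ e.source ∧
      fderiv ℝ Φ θ ∈ range ((↑) : ((Z × P × X) ≃L[ℝ] (Z × P × X)) → (Z × P × X →L[ℝ] Z × P × X)) := by
    refine Filter.Eventually.and (e.open_source.mem_nhds hs.mem_toOpenPartialHomeomorph_source) ?_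
    refine (hΦ.continuous_fderiv htop).continuousAt.eventually_mem
      (ContinuousLinearEquiv.isOpen.mem_nhds ?_)
    rw [hΦd.fderiv]
    exact ⟨_, rfl⟩
  obtain ⟨ε, hε, hball⟩ := Metric.eventually_nhds_iff_ball.1 hN
  filter_upwards [Metric.ball_mem_nhds _ hε] with x hx g U hg hg0 hU0 hUn hUF
  have hx' : dist x.1 p₀ < ε ∧ ‖x.2‖ < ε := by
    rwa [mem_ball, Prod.dist_eq, max_lt_iff, dist_zero_right] at hx
  have hmem : ∀ᶠ a in 𝓝 (0 : T), (g a, x.1, U a) ∈ ball ((z₀, p₀, 0) : Z × P × X) ε := by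
    have : ∀ᶠ a in 𝓝 (0 : T), g a ∈ ball z₀ ε :=
      hg.continuous.continuousAt.eventually_mem (by rw [hg0]; exact Metric.ball_mem_nhds _ hε)
    filter_upwards [this] with a ha
    rw [mem_ball, Prod.dist_eq, Prod.dist_eq, max_lt_iff, max_lt_iff]
    exact ⟨ha, hx'.1, by rw [dist_zero_right, hUn]; exact hx'.2⟩
  have hval (a : T) : Φ (g a, x.1, U a) = (g a, x.1, 0) := by
    simp [Φ, hUF]
  have hsymm : ∀ a, (g a, x.1, U a) ∈ ball ((z₀, p₀, 0) : Z × P × X) ε →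
      e.symm (g a, x.1, 0) = (g a, x.1, U a) := fun a ha => by
    rw [← hval]
    exact e.left_inv (hball _ ha).1
  have h0 := hmem.self_of_nhds
  obtain ⟨⟨hsrc, e', he'⟩⟩ : Nonempty ((g 0, x.1, U 0) ∈ e.source ∧ fderiv ℝ Φ (g 0, x.1, U 0) ∈
      range ((↑) : ((Z × P × X) ≃L[ℝ] (Z × P × X)) → (Z × P × X →L[ℝ] Z × P × X))) := ⟨hball _ h0⟩
  have hs1 : ContDiffAt ℝ (⊤ : ℕ∞) e.symm (g 0, x.1, 0) := by
    refine e.contDiffAt_symm (f₀' := e') ?_ ?_ ?_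
    · rw [← hval]; exact e.map_source hsrc
    · rw [hsymm 0 h0, he']
      exact (hΦ.differentiable htop _).hasFDerivAt
    · exact hΦ.contDiffAt
  have hc : ContDiffAt ℝ (⊤ : ℕ∞) (fun a => (e.symm (g a, x.1, 0)).2.2) 0 :=
    (hs1.comp (0 : T) (f := fun a => (g a, x.1, (0 : X)))
      (hg.contDiffAt.prodMk (contDiffAt_const.prodMk contDiffAt_const))).snd.snd
  refine hc.congr_of_eventuallyEq ?_
  filter_upwards [hmem] with a ha
  rw [hsymm a ha]

/-- Solvability of `w = 𝓕 (p, w)` with a linear constraint on `(p, w)`. -/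
lemma exists_solution {𝓕 : P × X → X} (h𝓕 : ContDiff ℝ (⊤ : ℕ∞) 𝓕) {p₀ : P}
    (hd : HasFDerivAt 𝓕 (0 : P × X →L[ℝ] X) (p₀, 0)) (h0 : 𝓕 (p₀, 0) = 0) (S : X →L[ℝ] P)
    {N : Set (P × X)} (hN : N ∈ 𝓝 (p₀, 0)) :
    ∀ᶠ q in 𝓝 p₀, ∃ x ∈ N, x.1 + S x.2 = q ∧ 𝓕 x = x.2 := by
  have htop : ((⊤ : ℕ∞) : WithTop ℕ∞) ≠ 0 := by simp
  let Φ : P × X → P × X := fun x => (x.1 + S x.2, x.2 - 𝓕 x)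
  have hΦ : ContDiff ℝ (⊤ : ℕ∞) Φ :=
    (contDiff_fst.add (S.contDiff.comp contDiff_snd)).prodMk (contDiff_snd.sub h𝓕)
  let Φ' : P × X →L[ℝ] P × X := (ContinuousLinearMap.fst ℝ P X +
    S.comp (ContinuousLinearMap.snd ℝ P X)).prod (ContinuousLinearMap.snd ℝ P X - 0)
  have hΦd : HasFDerivAt Φ Φ' (p₀, 0) :=
    (hasFDerivAt_fst.add (S.hasFDerivAt.comp _ hasFDerivAt_snd)).prodMk (hasFDerivAt_snd.sub hd)
  have hsurj : Φ'.range = ⊤ := by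
    refine LinearMap.range_eq_top.2 fun q => ⟨(q.1 - S q.2, q.2), ?_⟩
    ext <;> simp [Φ']
  have hmap := (hΦ.contDiffAt.hasStrictFDerivAt' hΦd htop).map_nhds_eq_of_surj hsurj
  have hΦ0 : Φ (p₀, 0) = (p₀, 0) := by simp [Φ, h0]
  rw [hΦ0] at hmap
  have him : Φ '' N ∈ 𝓝 ((p₀, 0) : P × X) := hmap ▸ image_mem_map hN
  have hcont : Tendsto (fun q : P => ((q, 0) : P × X)) (𝓝 p₀) (𝓝 (p₀, 0)) := by
    exact (Continuous.prodMk_left (0 : X)).tendsto p₀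
  filter_upwards [hcont him] with q hq
  obtain ⟨x, hx, hxq⟩ := hq
  refine ⟨x, hx, congrArg Prod.fst hxq, ?_⟩
  have h2 : x.2 - 𝓕 x = 0 := congrArg Prod.snd hxq
  exact (sub_eq_zero.1 h2).symm

end Orbit

section Equivariance

open UnitAddTorus MeasureTheory

variable {R H : Type} [NormedAddCommGroup R] [NormedSpace ℝ R]
  [NormedAddCommGroup H] [InnerProductSpace ℂ H] [CompleteSpace H]

lemma ext_fCoeff {q q' : C(Tor, H)} (h : ∀ k, fCoeff q k = fCoeff q' k) : q = q' := by
  refine sub_eq_zero.1 (eq_zero_of_fCoeff_eq_zero fun k => ?_)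
  rw [← fCoeffCLM_apply, map_sub, fCoeffCLM_apply, fCoeffCLM_apply, h, sub_self]

/-- The action of translations on coefficient sequences. -/
def shiftSeq (H : Type) [NormedAddCommGroup H] [InnerProductSpace ℂ H] (t : Tor) :
    CoeffSeq H →L[ℝ] CoeffSeq H :=
  diag H (fun k => mFourier k t) fun k => (norm_mFourier_apply k t).le

omit [CompleteSpace H] in
lemma shiftSeq_apply (t : Tor) (w : CoeffSeq H) (k : Fin 2 → ℤ) :
    shiftSeq H t w k = mFourier k t • w k := rfl

omit [CompleteSpace H] in
lemma shiftSeq_zero (w : CoeffSeq H) : shiftSeq H 0 w = w := by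
  ext k; rw [shiftSeq_apply, mFourier_zero_arg, one_smul]

omit [CompleteSpace H] in
lemma shiftSeq_add (s t : Tor) (w : CoeffSeq H) :
    shiftSeq H (s + t) w = shiftSeq H s (shiftSeq H t w) := by
  ext k; rw [shiftSeq_apply, shiftSeq_apply, shiftSeq_apply, mFourier_add_arg, mul_smul]

omit [CompleteSpace H] in
lemma norm_shiftSeq (t : Tor) (w : CoeffSeq H) : ‖shiftSeq H t w‖ = ‖w‖ := by
  rw [lp.norm_eq_tsum_rpow (by norm_num), lp.norm_eq_tsum_rpow (by norm_num)]
  simp_rw [shiftSeq_apply, norm_smul, norm_mFourier_apply, one_mul]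

omit [CompleteSpace H] in
lemma shiftSeq_apply_zero (t : Tor) (w : CoeffSeq H) : shiftSeq H t w 0 = w 0 := by
  rw [shiftSeq_apply, mFourier_zero, ContinuousMap.one_apply, one_smul]

lemma sumWave_shiftSeq (m : CoeffSeq ℂ) (t : Tor) (w : CoeffSeq H) :
    sumWave m (shiftSeq H t w) = transl t (sumWave m w) :=
  ext_fCoeff fun k => by
    rw [fCoeff_transl, fCoeff_sumWave, fCoeff_sumWave, shiftSeq_apply, smul_comm]

lemma nlSource_apply {M : ℂ × ℂ × R → H →L[ℝ] H} (hM : Continuous M)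
    (j : H →L[ℝ] ℂ × ℂ × R) (a : ℂ × ℂ × R) (v : H) (w : CoeffSeq H) (x : Tor) :
    nlSource M j a v w x = M (carrier R a x + j (sol H w x)) (v + solDeriv H 0 w x) := by
  rw [nlSource, contApply_apply, superpose_apply hM]
  rfl

lemma nlSource_transl {M : ℂ × ℂ × R → H →L[ℝ] H} (hM : Continuous M)
    (j : H →L[ℝ] ℂ × ℂ × R) (z₁ z₂ : ℂ) (r : R) (v : H) (w : CoeffSeq H) (t : Tor) :
    nlSource M j (mFourier freqFst t * z₁, mFourier freqSnd t * z₂, r) v (shiftSeq H t w)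
      = transl t (nlSource M j (z₁, z₂, r) v w) := by
  have h1 : sol H (shiftSeq H t w) = transl t (sol H w) := sumWave_shiftSeq _ t w
  have h2 : solDeriv H 0 (shiftSeq H t w) = transl t (solDeriv H 0 w) := sumWave_shiftSeq _ t w
  ext x
  rw [transl_apply, nlSource_apply hM, nlSource_apply hM, h1, h2, transl_apply, transl_apply,
    carrier_apply, carrier_apply]
  simp only [mFourier_add_arg, mul_assoc]

lemma nlResidual_shiftSeq {M : ℂ × ℂ × R → H →L[ℝ] H} (hM : ContDiff ℝ (⊤ : ℕ∞) M)
    (j : H →L[ℝ] ℂ × ℂ × R) (z₁ z₂ : ℂ) (r : R) (v : H) (w : CoeffSeq H) (t : Tor) :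
    nlResidual M j (mFourier freqFst t * z₁, mFourier freqSnd t * z₂, r) v (shiftSeq H t w)
      = shiftSeq H t (nlResidual M j (z₁, z₂, r) v w) := by
  ext k
  rw [shiftSeq_apply, nlResidual_apply hM, nlResidual_apply hM, nlSource_transl hM.continuous,
    fCoeff_transl, smul_comm]

lemma nlResidual_eq_zero {M : ℂ × ℂ × R → H →L[ℝ] H} (hM : ContDiff ℝ (⊤ : ℕ∞) M)
    (j : H →L[ℝ] ℂ × ℂ × R) (a : ℂ × ℂ × R) : nlResidual M j a 0 0 = 0 := by
  ext k
  have h : nlSource M j a 0 0 = 0 := by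
    rw [nlSource, map_zero (constCLM H), map_zero (solDeriv H 0), add_zero, map_zero]
  rw [nlResidual_apply hM, h, ← fCoeffCLM_apply, map_zero, smul_zero]
  rfl

lemma hasFDerivAt_bilinear_zero {P Q G Θ : Type} [NormedAddCommGroup P] [NormedSpace ℝ P]
    [NormedAddCommGroup Q] [NormedSpace ℝ Q] [NormedAddCommGroup G] [NormedSpace ℝ G]
    [NormedAddCommGroup Θ] [NormedSpace ℝ Θ] (T : P →L[ℝ] Q →L[ℝ] G) {c : Θ → P} {a : Θ → Q} {θ : Θ}
    (hc : DifferentiableAt ℝ c θ) (ha : DifferentiableAt ℝ a θ) (hc0 : c θ = 0) (ha0 : a θ = 0) :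
    HasFDerivAt (fun θ => T (c θ) (a θ)) (0 : Θ →L[ℝ] G) θ := by
  refine (T.hasFDerivAt_of_bilinear hc.hasFDerivAt ha.hasFDerivAt).congr_fderiv ?_
  rw [hc0, ha0]
  ext
  simp

lemma hasFDerivAt_contApply_zero {K A G Θ : Type} [TopologicalSpace K] [CompactSpace K]
    [NormedAddCommGroup A] [NormedSpace ℝ A] [NormedAddCommGroup G] [NormedSpace ℝ G]
    [NormedAddCommGroup Θ] [NormedSpace ℝ Θ] {c : Θ → C(K, A →L[ℝ] G)} {a : Θ → C(K, A)} {θ : Θ}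
    (hc : DifferentiableAt ℝ c θ) (ha : DifferentiableAt ℝ a θ) (hc0 : c θ = 0) (ha0 : a θ = 0) :
    HasFDerivAt (fun θ => contApply K A G (c θ) (a θ)) (0 : Θ →L[ℝ] C(K, G)) θ :=
  hasFDerivAt_bilinear_zero (P := C(K, A →L[ℝ] G)) (Q := C(K, A)) (G := C(K, G))
    (contApply K A G) hc ha hc0 ha0

lemma hasFDerivAt_nlResidual_zero {M : ℂ × ℂ × R → H →L[ℝ] H} (hM : ContDiff ℝ (⊤ : ℕ∞) M)
    (j : H →L[ℝ] ℂ × ℂ × R) {Θ : Type} [NormedAddCommGroup Θ] [NormedSpace ℝ Θ]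
    {a : Θ → ℂ × ℂ × R} {v : Θ → H} {w : Θ → CoeffSeq H} (da : ContDiff ℝ (⊤ : ℕ∞) a)
    (dv : ContDiff ℝ (⊤ : ℕ∞) v) (dw : ContDiff ℝ (⊤ : ℕ∞) w) {θ : Θ} (hv : v θ = 0)
    (hw : w θ = 0) (hM0 : ∀ x, M (carrier R (a θ) x) = 0) :
    HasFDerivAt (fun θ => nlResidual M j (a θ) (v θ) (w θ)) (0 : Θ →L[ℝ] CoeffSeq H) θ := by
  have htop : ((⊤ : ℕ∞) : WithTop ℕ∞) ≠ 0 := by simp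
  have hF := ((contDiff_nlResidual hM j da dv dw).differentiable htop θ).hasFDerivAt
  refine hF.congr_fderiv ?_
  have hS : HasFDerivAt (fun θ => nlSource M j (a θ) (v θ) (w θ)) (0 : Θ →L[ℝ] C(Tor, H)) θ := by
    refine hasFDerivAt_contApply_zero ?_ ?_ ?_ ?_
    · exact ((contDiff_superpose hM).comp (((carrier R).contDiff.comp da).add
        ((j.compLeftContinuous ℝ Tor).contDiff.comp
          ((sol H).contDiff.comp dw)))).differentiable htop θ
    · exact (((constCLM H).contDiff.comp dv).add
        ((solDeriv H 0).contDiff.comp dw)).differentiable htop θ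
    · ext1 x
      rw [hw, map_zero, map_zero, add_zero, superpose_apply hM.continuous, hM0]
      rfl
    · rw [hv, hw, map_zero, map_zero, add_zero]
  ext u k
  have h1 := (lp.evalCLM ℝ (fun _ : Fin 2 → ℤ => H) 2 k).hasFDerivAt.comp θ hF
  have h2 := ((fCoeffCLM H k).hasFDerivAt.comp θ hS).const_smul (weight k)
  have e : (lp.evalCLM ℝ (fun _ : Fin 2 → ℤ => H) 2 k) ∘ (fun θ => nlResidual M j (a θ) (v θ) (w θ))
      = weight k • (fCoeffCLM H k ∘ fun θ => nlSource M j (a θ) (v θ) (w θ)) := by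
    ext θ
    exact nlResidual_apply hM j _ _ _ k
  rw [e] at h1
  have h3 := congrArg (fun T : Θ →L[ℝ] H => T u) (h1.unique h2)
  exact h3.trans (by simp)

lemma solDeriv_source {u : C(Tor, H)} {w : CoeffSeq H} (h : ∀ k, w k = weight k • fCoeff u k)
    (x : Tor) : w 0 + solDeriv H 1 w x - Complex.I • solDeriv H 0 w x = u x := by
  have e : wave 0 (w 0) + solDeriv H 1 w - Complex.I • solDeriv H 0 w = u := by
    refine ext_fCoeff fun k => ?_
    rw [sub_eq_add_neg, ← neg_smul, fCoeff_add, fCoeff_add, fCoeff_smul, fCoeff_wave, solDeriv,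
      solDeriv, fCoeff_sumWave, fCoeff_sumWave, weightSeq_apply, weightSeq_apply]
    have hk := weight_ne_zero k
    have hu : fCoeff u k = (weight k)⁻¹ • w k := by rw [h, smul_smul, inv_mul_cancel₀ hk, one_smul]
    rw [hu]
    by_cases h0 : k = 0
    · subst h0
      simp [freq_zero_freq, weight]
    · rw [if_neg h0, zero_add, smul_smul, ← add_smul]
      congr 1
      have hc : (freq 1 k - Complex.I * freq 0 k) * cauchySymbol k = 1 :=
        mul_inv_cancel₀ (cauchy_ne_zero h0)
      linear_combination (weight k)⁻¹ * hc
  rw [← e]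
  simp [mFourier_zero]

end Equivariance

section Angle

/-- A smooth function on the plane inverting `x ↦ exp(2 π i x)` for small real `x`. -/
lemma exists_angle : ∃ ξ : ℂ → ℝ, ContDiff ℝ (⊤ : ℕ∞) ξ ∧
    ∀ x : ℝ, |x| ≤ 1 / 16 → ξ (Complex.exp (2 * Real.pi * Complex.I * x)) = x := by
  let β : ContDiffBump (1 : ℂ) := ⟨1 / 2, 3 / 4, by norm_num, by norm_num⟩
  refine ⟨fun z => β z * ((Complex.log z).im / (2 * Real.pi)), ?_, fun x hx => ?_⟩
  · refine contDiff_iff_contDiffAt.2 fun z => ?_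
    by_cases hz : dist z 1 < 1
    · have hz' : z ∈ Complex.slitPlane := by
        left
        rw [dist_comm, dist_eq_norm] at hz
        have := (Complex.re_le_norm (1 - z)).trans_lt hz
        simp at this
        exact this
      have hlog : ContDiffAt ℝ (⊤ : ℕ∞) Complex.log z :=
        (Complex.contDiffAt_log hz').restrict_scalars ℝ
      exact β.contDiff.contDiffAt.mul
        ((Complex.imCLM.contDiff.contDiffAt.comp z hlog).div_const _)
    · have hβ : β =ᶠ[𝓝 z] 0 := by
        rw [← notMem_tsupport_iff_eventuallyEq, β.tsupport_eq, mem_closedBall]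
        have : β.rOut = 3 / 4 := rfl
        rw [this]
        linarith
      refine (contDiffAt_const (c := (0 : ℝ))).congr_of_eventuallyEq ?_
      filter_upwards [hβ] with y hy
      simp [hy]
  · have hpi := Real.pi_pos
    have hpi' := Real.pi_lt_d2
    obtain ⟨h1, h2⟩ := abs_le.1 hx
    have e : (2 * Real.pi * Complex.I * x : ℂ) = Complex.I * ((2 * Real.pi * x : ℝ) : ℂ) := by
      push_cast; ring
    have him : (2 * Real.pi * Complex.I * x : ℂ).im = 2 * Real.pi * x := by
      rw [e]; simp
    have hb : β (Complex.exp (2 * Real.pi * Complex.I * x)) = 1 := by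
      refine β.one_of_mem_closedBall ?_
      rw [mem_closedBall, dist_eq_norm, e]
      refine (Real.norm_exp_I_mul_ofReal_sub_one_le).trans ?_
      change _ ≤ (1 / 2 : ℝ)
      rw [Real.norm_eq_abs, abs_mul, abs_of_pos Real.two_pi_pos]
      nlinarith
    beta_reduce
    rw [hb, Complex.log_exp, him]
    · field_simp
    · rw [him]; nlinarith
    · rw [him]; nlinarith

end Angle

section Discs

open UnitAddTorus MeasureTheory

variable {H : Type} [NormedAddCommGroup H] [InnerProductSpace ℂ H] [CompleteSpace H]

lemma mFourier_freqFst (a : Fin 2 → ℝ) :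
    mFourier freqFst (toTor a) = Complex.exp (2 * Real.pi * Complex.I * a 0) := by
  rw [mFourier_toTor]; congr 1; simp [freqFst]

lemma mFourier_freqSnd (a : Fin 2 → ℝ) :
    mFourier freqSnd (toTor a) = Complex.exp (2 * Real.pi * Complex.I * a 1) := by
  rw [mFourier_toTor]; congr 1; simp [freqSnd]

/-- The point of the torus with the same real and imaginary coordinates, as a linear map. -/
def planeCoord : ℂ →L[ℝ] (Fin 2 → ℝ) :=
  ContinuousLinearMap.pi fun i => if i = 0 then Complex.reCLM else Complex.imCLM

lemma planeCoord_zero_apply (ζ : ℂ) : planeCoord ζ 0 = ζ.re := by simp [planeCoord]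

lemma planeCoord_one_apply (ζ : ℂ) : planeCoord ζ 1 = ζ.im := by simp [planeCoord]

omit [CompleteSpace H] in
lemma contDiff_shiftSeq_of_contDiffAt {w : CoeffSeq H}
    (h : ContDiffAt ℝ (⊤ : ℕ∞) (fun a => shiftSeq H (toTor a) w) 0) :
    ContDiff ℝ (⊤ : ℕ∞) fun a => shiftSeq H (toTor a) w := by
  refine contDiff_iff_contDiffAt.2 fun a₀ => ?_
  have e : (fun a => shiftSeq H (toTor a) w)
      = fun a => shiftSeq H (toTor a₀) (shiftSeq H (toTor (a - a₀)) w) := by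
    ext1 a
    rw [← shiftSeq_add, ← toTor_add, add_sub_cancel]
  rw [e]
  refine (shiftSeq H (toTor a₀)).contDiff.contDiffAt.comp a₀ ?_
  have hs : ContDiffAt ℝ (⊤ : ℕ∞) (fun a : Fin 2 → ℝ => a - a₀) a₀ :=
    contDiffAt_id.sub contDiffAt_const
  refine ContDiffAt.comp (g := fun a => shiftSeq H (toTor a) w) a₀ ?_ hs
  rwa [sub_self]

lemma sol_apply_toTor (w : CoeffSeq H) (t : Tor) : sol H w t = sol H (shiftSeq H t w) 0 := by
  rw [sol, sumWave_shiftSeq, transl_apply, zero_add]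

lemma solDeriv_apply_toTor (i : Fin 2) (w : CoeffSeq H) (t : Tor) :
    solDeriv H i w t = solDeriv H i (shiftSeq H t w) 0 := by
  rw [solDeriv, sumWave_shiftSeq, transl_apply, zero_add]

variable (H) in
/-- Evaluation of a function on the torus at the origin. -/
def evalZero : C(Tor, H) →L[ℝ] H := ContinuousMap.evalCLM ℝ (0 : Tor)

lemma contDiff_sol {w : CoeffSeq H}
    (h : ContDiff ℝ (⊤ : ℕ∞) fun a => shiftSeq H (toTor a) w) :
    ContDiff ℝ (⊤ : ℕ∞) fun a => sol H w (toTor a) := by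
  simp_rw [sol_apply_toTor w]
  exact (((evalZero H).comp (sol H)).contDiff (n := ((⊤ : ℕ∞) : WithTop ℕ∞))).comp h

lemma fderiv_sol {w : CoeffSeq H}
    (h : ContDiff ℝ (⊤ : ℕ∞) fun a => shiftSeq H (toTor a) w) (a : Fin 2 → ℝ) (i : Fin 2) :
    fderiv ℝ (fun a => sol H w (toTor a)) a (Pi.single i 1) = solDeriv H i w (toTor a) := by
  have hd := (h.differentiable (by simp) a).hasFDerivAt
  set D := fderiv ℝ (fun a => shiftSeq H (toTor a) w) a with hD
  have hline : HasDerivAt (fun t : ℝ => shiftSeq H (toTor (a + Pi.single i t)) w)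
      (D (Pi.single i 1)) 0 := by
    have hl : HasDerivAt (fun t : ℝ => a + Pi.single i t) (Pi.single i (1 : ℝ)) 0 := by
      have := (ContinuousLinearMap.single ℝ (fun _ : Fin 2 => ℝ) i).hasDerivAt (x := (0 : ℝ))
      exact this.const_add a
    refine HasFDerivAt.comp_hasDerivAt (l := fun a => shiftSeq H (toTor a) w) (0 : ℝ) ?_ hl
    simpa using hd
  have hcoef (k : Fin 2 → ℤ) : D (Pi.single i 1) k = freq i k • shiftSeq H (toTor a) w k := by
    have h1 : HasDerivAt (fun t : ℝ => shiftSeq H (toTor (a + Pi.single i t)) w k)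
      (D (Pi.single i 1) k) 0 :=
      (lp.evalCLM ℝ (fun _ : Fin 2 → ℤ => H) 2 k).hasFDerivAt.comp_hasDerivAt (0 : ℝ) hline
    have h2 := (hasDerivAt_mFourier_toTor_single i k).smul_const (shiftSeq H (toTor a) w k)
    refine h1.unique (h2.congr_of_eventuallyEq (Eventually.of_forall fun t => ?_))
    simp only [shiftSeq_apply, toTor_add, mFourier_add_arg, smul_smul, mul_comm]
  have hsol : sol H (D (Pi.single i 1)) = solDeriv H i (shiftSeq H (toTor a) w) :=
    ext_fCoeff fun k => by
      rw [sol, solDeriv, fCoeff_sumWave, fCoeff_sumWave, hcoef, smul_smul, weightSeq_apply,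
        weightSeq_apply]
      congr 1; ring
  have h3 : HasFDerivAt (fun a => sol H w (toTor a))
      ((evalZero H).comp ((sol H).comp D)) a := by
    simp_rw [sol_apply_toTor w]
    exact ((evalZero H).comp (sol H)).hasFDerivAt.comp a hd
  rw [h3.fderiv, solDeriv_apply_toTor, ← hsol]
  rfl

end Discs

section Core

open UnitAddTorus MeasureTheory

variable {H : Type} [NormedAddCommGroup H] [InnerProductSpace ℂ H] [CompleteSpace H]

/-- The map `ζ ↦ b + re ζ • v + im ζ • c` plus a doubly periodic correction. -/
def discMap (b v c : H) (w : CoeffSeq H) (ζ : ℂ) : H :=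
  b + ζ.re • v + ζ.im • c + sol H w (toTor (planeCoord ζ))

lemma contDiff_discMap (b v c : H) {w : CoeffSeq H}
    (h : ContDiff ℝ (⊤ : ℕ∞) fun a => shiftSeq H (toTor a) w) :
    ContDiff ℝ (⊤ : ℕ∞) (discMap b v c w) := by
  have hre : ContDiff ℝ (⊤ : ℕ∞) (fun ζ : ℂ => ζ.re • v) :=
    Complex.reCLM.contDiff.smul contDiff_const
  have him : ContDiff ℝ (⊤ : ℕ∞) (fun ζ : ℂ => ζ.im • c) :=
    Complex.imCLM.contDiff.smul contDiff_const
  exact ((contDiff_const.add hre).add him).add ((contDiff_sol h).comp planeCoord.contDiff)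

lemma hasFDerivAt_discMap (b v c : H) {w : CoeffSeq H}
    (h : ContDiff ℝ (⊤ : ℕ∞) fun a => shiftSeq H (toTor a) w) (ζ : ℂ) :
    HasFDerivAt (discMap b v c w) (Complex.reCLM.smulRight v + Complex.imCLM.smulRight c +
      (fderiv ℝ (fun a => sol H w (toTor a)) (planeCoord ζ)).comp planeCoord) ζ := by
  have hre : HasFDerivAt (fun ζ : ℂ => ζ.re • v) (Complex.reCLM.smulRight v) ζ :=
    (Complex.reCLM.smulRight v).hasFDerivAt
  have him : HasFDerivAt (fun ζ : ℂ => ζ.im • c) (Complex.imCLM.smulRight c) ζ :=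
    (Complex.imCLM.smulRight c).hasFDerivAt
  have hs := (((contDiff_sol h).differentiable (by simp) (planeCoord ζ)).hasFDerivAt).comp ζ
    planeCoord.hasFDerivAt
  exact ((hre.const_add b).add him).add hs

lemma planeCoord_one : planeCoord 1 = Pi.single 0 1 := by
  ext i; fin_cases i <;> simp [planeCoord]

lemma planeCoord_I : planeCoord Complex.I = Pi.single 1 1 := by
  ext i; fin_cases i <;> simp [planeCoord]

lemma fderiv_discMap_one (b v c : H) {w : CoeffSeq H}
    (h : ContDiff ℝ (⊤ : ℕ∞) fun a => shiftSeq H (toTor a) w) (ζ : ℂ) :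
    fderiv ℝ (discMap b v c w) ζ 1 = v + solDeriv H 0 w (toTor (planeCoord ζ)) := by
  rw [(hasFDerivAt_discMap b v c h ζ).fderiv, ← fderiv_sol h, ← planeCoord_one]
  simp

lemma fderiv_discMap_I (b v c : H) {w : CoeffSeq H}
    (h : ContDiff ℝ (⊤ : ℕ∞) fun a => shiftSeq H (toTor a) w) (ζ : ℂ) :
    fderiv ℝ (discMap b v c w) ζ Complex.I = c + solDeriv H 1 w (toTor (planeCoord ζ)) := by
  rw [(hasFDerivAt_discMap b v c h ζ).fderiv, ← fderiv_sol h, ← planeCoord_I]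
  simp

/-- The coefficient `Q` at the point `y + x • v + x' • c`, where the real numbers `x` and `x'`
are read off from points of the unit circle. -/
def circleCoeff (Q : H → H →L[ℝ] H) (ξ : ℂ → ℝ) (z : ℂ × ℂ × (H × H × H)) : H →L[ℝ] H :=
  Q (z.2.2.2.2 + ξ z.1 • z.2.2.1 + ξ z.2.1 • z.2.2.2.1)

omit [CompleteSpace H] in
lemma contDiff_circleCoeff {Q : H → H →L[ℝ] H} (hQ : ContDiff ℝ (⊤ : ℕ∞) Q) {ξ : ℂ → ℝ}
    (hξ : ContDiff ℝ (⊤ : ℕ∞) ξ) : ContDiff ℝ (⊤ : ℕ∞) (circleCoeff Q ξ) := by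
  have h1 : ContDiff ℝ (⊤ : ℕ∞) (fun z : ℂ × ℂ × (H × H × H) => z.2) := contDiff_snd
  have h2 : ContDiff ℝ (⊤ : ℕ∞) (fun z : ℂ × ℂ × (H × H × H) => z.2.2) := contDiff_snd.comp h1
  have h3 : ContDiff ℝ (⊤ : ℕ∞) (fun z : ℂ × ℂ × (H × H × H) => z.2.2.2) := contDiff_snd.comp h2
  exact hQ.comp (((contDiff_snd.comp h3).add
    ((hξ.comp contDiff_fst).smul (contDiff_fst.comp h2))).add
    ((hξ.comp (contDiff_fst.comp h1)).smul (contDiff_fst.comp h3)))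

variable (H) in
/-- The inclusion of the last factor. -/
def lastIncl : H →L[ℝ] ℂ × ℂ × (H × H × H) :=
  (0 : H →L[ℝ] ℂ).prod ((0 : H →L[ℝ] ℂ).prod
    ((0 : H →L[ℝ] H).prod ((0 : H →L[ℝ] H).prod (ContinuousLinearMap.id ℝ H))))

/-- The fixed point equation for the correction term of a disc. -/
def discEquation (Q : H → H →L[ℝ] H) (ξ : ℂ → ℝ) (x : (ℂ × ℂ) × (H × H) × CoeffSeq H) :
    CoeffSeq H :=
  nlResidual (circleCoeff Q ξ) (lastIncl H)
    (x.1.1, x.1.2, (x.2.1.2, Complex.I • x.2.1.2 + x.2.2 0, x.2.1.1)) x.2.1.2 x.2.2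

omit [CompleteSpace H] in
lemma contDiff_discEquation_aux :
    ContDiff ℝ (⊤ : ℕ∞) fun x : (ℂ × ℂ) × (H × H) × CoeffSeq H =>
      ((x.1.1, x.1.2, (x.2.1.2, Complex.I • x.2.1.2 + x.2.2 0, x.2.1.1)) :
        ℂ × ℂ × (H × H × H)) := by
  have h1 : ContDiff ℝ (⊤ : ℕ∞) fun x : (ℂ × ℂ) × (H × H) × CoeffSeq H => x.1 := contDiff_fst
  have h2 : ContDiff ℝ (⊤ : ℕ∞) fun x : (ℂ × ℂ) × (H × H) × CoeffSeq H => x.2 := contDiff_snd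
  have h3 : ContDiff ℝ (⊤ : ℕ∞) fun x : (ℂ × ℂ) × (H × H) × CoeffSeq H => x.2.1 :=
    contDiff_fst.comp h2
  have h4 : ContDiff ℝ (⊤ : ℕ∞) fun x : (ℂ × ℂ) × (H × H) × CoeffSeq H => x.2.1.2 :=
    contDiff_snd.comp h3
  have h5 : ContDiff ℝ (⊤ : ℕ∞) fun x : (ℂ × ℂ) × (H × H) × CoeffSeq H => x.2.2 0 :=
    (lp.evalCLM ℝ (fun _ : Fin 2 → ℤ => H) 2 0).contDiff.comp (contDiff_snd.comp h2)
  have h6 : ContDiff ℝ (⊤ : ℕ∞) fun x : (ℂ × ℂ) × (H × H) × CoeffSeq H => Complex.I • x.2.1.2 :=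
    (Jst H).contDiff.comp h4
  exact (contDiff_fst.comp h1).prodMk ((contDiff_snd.comp h1).prodMk
    (h4.prodMk ((h6.add h5).prodMk (contDiff_fst.comp h3))))

lemma contDiff_discEquation {Q : H → H →L[ℝ] H} (hQ : ContDiff ℝ (⊤ : ℕ∞) Q) {ξ : ℂ → ℝ}
    (hξ : ContDiff ℝ (⊤ : ℕ∞) ξ) : ContDiff ℝ (⊤ : ℕ∞) (discEquation Q ξ) :=
  contDiff_nlResidual (contDiff_circleCoeff hQ hξ) _ contDiff_discEquation_aux
    (contDiff_snd.comp (contDiff_fst.comp contDiff_snd)) (contDiff_snd.comp contDiff_snd)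

lemma hasFDerivAt_discEquation {Q : H → H →L[ℝ] H} (hQ : ContDiff ℝ (⊤ : ℕ∞) Q) {ξ : ℂ → ℝ}
    (hξ : ContDiff ℝ (⊤ : ℕ∞) ξ) {p : H} (hp : Q p = 0) (z : ℂ × ℂ) :
    HasFDerivAt (discEquation Q ξ) (0 : _ →L[ℝ] CoeffSeq H) (z, (p, 0), 0) := by
  refine hasFDerivAt_nlResidual_zero (contDiff_circleCoeff hQ hξ) _ contDiff_discEquation_aux
    (contDiff_snd.comp (contDiff_fst.comp contDiff_snd)) (contDiff_snd.comp contDiff_snd) rfl rfl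
    fun x => ?_
  rw [carrier_apply, circleCoeff]
  simp [hp]

lemma discEquation_shiftSeq {Q : H → H →L[ℝ] H} (hQ : ContDiff ℝ (⊤ : ℕ∞) Q) {ξ : ℂ → ℝ}
    (hξ : ContDiff ℝ (⊤ : ℕ∞) ξ) (p : H × H) (w : CoeffSeq H) (t : Tor) :
    discEquation Q ξ ((mFourier freqFst t, mFourier freqSnd t), p, shiftSeq H t w)
      = shiftSeq H t (discEquation Q ξ ((1, 1), p, w)) := by
  rw [discEquation, discEquation, ← nlResidual_shiftSeq (contDiff_circleCoeff hQ hξ)]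
  simp only [mul_one, shiftSeq_apply_zero]

/-- A solution of the fixed point equation gives a disc solving the nonlinear Cauchy-Riemann
equation near the origin. -/
lemma cauchyRiemann_discMap {Q : H → H →L[ℝ] H} (hQ : ContDiff ℝ (⊤ : ℕ∞) Q) {ξ : ℂ → ℝ}
    (hξ : ContDiff ℝ (⊤ : ℕ∞) ξ)
    (hξ' : ∀ x : ℝ, |x| ≤ 1 / 16 → ξ (Complex.exp (2 * Real.pi * Complex.I * x)) = x)
    {b v : H} {w : CoeffSeq H} (hw : discEquation Q ξ ((1, 1), (b, v), w) = w)
    (h : ContDiff ℝ (⊤ : ℕ∞) fun a => shiftSeq H (toTor a) w) {ζ : ℂ}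
    (hζ : ζ ∈ ball (0 : ℂ) (1 / 16)) :
    let F := discMap b v (Complex.I • v + w 0) w
    fderiv ℝ F ζ Complex.I = Complex.I • fderiv ℝ F ζ 1 + Q (F ζ) (fderiv ℝ F ζ 1) := by
  intro F
  set x := toTor (planeCoord ζ) with hx
  have hM := contDiff_circleCoeff hQ hξ
  have hk (k) := congrArg (fun u : CoeffSeq H => u k) hw
  simp only [discEquation, nlResidual_apply hM] at hk
  have hs := solDeriv_source (fun k => (hk k).symm) x
  have hn : ‖ζ‖ < 1 / 16 := by simpa using hζ
  have e0 : ξ (mFourier freqFst x) = ζ.re := by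
    rw [hx, mFourier_freqFst, planeCoord_zero_apply]
    exact hξ' _ ((Complex.abs_re_le_norm ζ).trans hn.le)
  have e1 : ξ (mFourier freqSnd x) = ζ.im := by
    rw [hx, mFourier_freqSnd, planeCoord_one_apply]
    exact hξ' _ ((Complex.abs_im_le_norm ζ).trans hn.le)
  have hF : F ζ = b + sol H w x + ζ.re • v + ζ.im • (Complex.I • v + w 0) := by
    simp only [F, discMap]; abel
  have hQF : circleCoeff Q ξ (carrier (H × H × H) (1, 1, v, Complex.I • v + w 0, b) x
      + lastIncl H (sol H w x)) = Q (F ζ) := by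
    rw [carrier_apply, circleCoeff, hF]
    simp [lastIncl, e0, e1]
  rw [nlSource_apply hM.continuous, hQF] at hs
  rw [fderiv_discMap_one _ _ _ h, fderiv_discMap_I _ _ _ h, ← hx, ← hs, smul_add]
  abel

/-- **Local solvability of the nonlinear Cauchy-Riemann equation** with prescribed 1-jet. -/
theorem exists_disc_of_coeff {Q : H → H →L[ℝ] H} (hQ : ContDiff ℝ (⊤ : ℕ∞) Q) {p : H}
    (hp : Q p = 0) {r : ℝ} (hr : 0 < r) :
    ∀ᶠ v in 𝓝 (0 : H), ∃ F : ℂ → H, ContDiff ℝ (⊤ : ℕ∞) F ∧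
      (∀ ζ ∈ ball (0 : ℂ) (1 / 16), F ζ ∈ ball p r ∧
        fderiv ℝ F ζ Complex.I = Complex.I • fderiv ℝ F ζ 1 + Q (F ζ) (fderiv ℝ F ζ 1)) ∧
      F 0 = p ∧ fderiv ℝ F 0 1 = v := by
  obtain ⟨ξ, hξ, hξ'⟩ := exists_angle
  have h𝓕 := contDiff_discEquation hQ hξ
  have hd := hasFDerivAt_discEquation hQ hξ hp (1, 1)
  have hsmooth := exists_smooth_orbit (T := Fin 2 → ℝ) h𝓕 hd
  have hincl : HasFDerivAt (fun x : (H × H) × CoeffSeq H => ((1, 1), x))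
      (ContinuousLinearMap.inr ℝ (ℂ × ℂ) ((H × H) × CoeffSeq H)) ((p, 0), 0) :=
    hasFDerivAt_prodMk_right _ _
  have h𝓖 : ContDiff ℝ (⊤ : ℕ∞)
      (fun x : (H × H) × CoeffSeq H => discEquation Q ξ ((1, 1), x)) :=
    h𝓕.comp (contDiff_const.prodMk contDiff_id)
  have hd𝓖 : HasFDerivAt (fun x : (H × H) × CoeffSeq H => discEquation Q ξ ((1, 1), x))
      (0 : (H × H) × CoeffSeq H →L[ℝ] CoeffSeq H) ((p, 0), 0) := by
    have := hd.comp ((p, 0), 0) hincl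
    rwa [ContinuousLinearMap.zero_comp] at this
  have h𝓖0 : discEquation Q ξ ((1, 1), (p, 0), 0) = 0 :=
    nlResidual_eq_zero (contDiff_circleCoeff hQ hξ) _ _
  let size : (H × H) × CoeffSeq H → ℝ := fun x =>
    ‖x.1.1 - p‖ + ‖x.1.2‖ + ‖Complex.I • x.1.2 + x.2 0‖ + ‖sol H x.2‖
  have hsize : Continuous size := by
    have h0 : Continuous fun x : (H × H) × CoeffSeq H => x.2 0 :=
      (lp.evalCLM ℝ (fun _ : Fin 2 → ℤ => H) 2 0).continuous.comp continuous_snd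
    have h1 : Continuous fun x : (H × H) × CoeffSeq H => sol H x.2 :=
      (sol H).continuous.comp continuous_snd
    fun_prop
  have hsmall : ∀ᶠ x in 𝓝 (((p, 0), 0) : (H × H) × CoeffSeq H), size x < r := by
    refine hsize.continuousAt.eventually_lt continuousAt_const ?_
    simpa [size] using hr
  let S : CoeffSeq H →L[ℝ] H × H :=
    ((evalZero H).comp (sol H)).prod ((evalZero H).comp (solDeriv H 0))
  have hsol := exists_solution h𝓖 hd𝓖 h𝓖0 S (hsmooth.and hsmall)
  have hq : Tendsto (fun v : H => (p, v)) (𝓝 0) (𝓝 (p, 0)) :=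
    (continuous_const.prodMk continuous_id).continuousAt
  filter_upwards [hq.eventually hsol] with v hv
  obtain ⟨⟨⟨b, u⟩, w⟩, ⟨hsm, hsz⟩, hS, hfix⟩ := hv
  simp only [size] at hsz
  have horbit : ContDiff ℝ (⊤ : ℕ∞) fun a => shiftSeq H (toTor a) w := by
    refine contDiff_shiftSeq_of_contDiffAt (hsm
      (fun a => (mFourier freqFst (toTor a), mFourier freqSnd (toTor a))) _ ?_ ?_ ?_ ?_ ?_)
    · simp_rw [mFourier_freqFst, mFourier_freqSnd]
      have hc (i : Fin 2) : ContDiff ℝ (⊤ : ℕ∞) fun a : Fin 2 → ℝ =>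
          Complex.exp (2 * Real.pi * Complex.I * a i) :=
        (contDiff_const.mul (Complex.ofRealCLM.contDiff.comp (contDiff_apply ℝ ℝ i))).cexp
      exact (hc 0).prodMk (hc 1)
    · simp [toTor_zero, mFourier_zero_arg]
    · simp only [toTor_zero, shiftSeq_zero]
    · exact fun a => norm_shiftSeq _ _
    · intro a
      rw [discEquation_shiftSeq hQ hξ, hfix]
  have hS1 : b + sol H w 0 = p := congrArg Prod.fst hS
  have hS2 : u + solDeriv H 0 w 0 = v := congrArg Prod.snd hS
  refine ⟨discMap b u (Complex.I • u + w 0) w, contDiff_discMap _ _ _ horbit, fun ζ hζ =>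
    ⟨?_, cauchyRiemann_discMap hQ hξ hξ' hfix horbit hζ⟩, ?_, ?_⟩
  · have hn : ‖ζ‖ ≤ 1 := by
      have : ‖ζ‖ < 1 / 16 := by simpa using hζ
      linarith
    rw [mem_ball, dist_eq_norm, discMap]
    set c := Complex.I • u + w 0
    set y := sol H w (toTor (planeCoord ζ))
    have h1 : ‖ζ.re • u‖ ≤ ‖u‖ := by
      rw [norm_smul]
      exact mul_le_of_le_one_left (norm_nonneg _) ((Complex.abs_re_le_norm ζ).trans hn)
    have h2 : ‖ζ.im • c‖ ≤ ‖c‖ := by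
      rw [norm_smul]
      exact mul_le_of_le_one_left (norm_nonneg _) ((Complex.abs_im_le_norm ζ).trans hn)
    have h3 : ‖y‖ ≤ ‖sol H w‖ := (sol H w).norm_coe_le_norm _
    calc ‖b + ζ.re • u + ζ.im • c + y - p‖ = ‖(b - p) + ζ.re • u + ζ.im • c + y‖ := by
          congr 1; abel
      _ ≤ ‖b - p‖ + ‖ζ.re • u‖ + ‖ζ.im • c‖ + ‖y‖ := norm_add₄_le
      _ < r := by linarith
  · simpa [discMap, toTor_zero] using hS1
  · rw [fderiv_discMap_one _ _ _ horbit, map_zero, toTor_zero, hS2]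

end Core

section Reduction

/-- A linear complex structure is conjugate to the standard one. -/
lemma exists_linearEquiv_conj {V : Type} [AddCommGroup V] [Module ℝ V] [FiniteDimensional ℝ V]
    {n : ℕ} (hn : Module.finrank ℝ V = 2 * n) (φ : Module.End ℝ V) (hφ : φ * φ = -1) :
    ∃ e : V ≃ₗ[ℝ] EuclideanSpace ℂ (Fin n), ∀ x, e (φ x) = Complex.I • e x := by
  let ψ : ℂ →ₐ[ℝ] Module.End ℝ V := Complex.lift ⟨φ, hφ⟩
  let _ : Module ℂ V := Module.compHom V ψ.toRingHom
  have hsmul (z : ℂ) (x : V) : z • x = ψ z x := rfl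
  have : IsScalarTower ℝ ℂ V := ⟨fun r z x => by rw [hsmul, hsmul, map_smul]; rfl⟩
  have : Module.Finite ℂ V := Module.Finite.of_restrictScalars_finite ℝ ℂ V
  have hfin : Module.finrank ℂ V = Module.finrank ℂ (EuclideanSpace ℂ (Fin n)) := by
    have h := Module.finrank_mul_finrank ℝ ℂ V
    rw [Complex.finrank_real_complex, hn] at h
    rw [finrank_euclideanSpace_fin]
    omega
  let e := LinearEquiv.ofFinrankEq V (EuclideanSpace ℂ (Fin n)) hfin
  refine ⟨e.restrictScalars ℝ, fun x => ?_⟩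
  have hI : φ x = Complex.I • x := by
    rw [hsmul]
    simp [ψ]
  rw [hI]
  exact map_smul e Complex.I x

/-- A real-linear map on `ℂ` intertwines the complex structures as soon as it does so at `1`. -/
lemma comp_Jst_eq {E : Type*} [NormedAddCommGroup E] [NormedSpace ℝ E] {A : ℂ →L[ℝ] E}
    {J : E →L[ℝ] E} (hJ : J.comp J = -ContinuousLinearMap.id ℝ E)
    (h : A Complex.I = J (A 1)) : A.comp (Jst ℂ) = J.comp A := by
  have hJJ (x : E) : J (J x) = -x := congrArg (fun T : E →L[ℝ] E => T x) hJ
  ext z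
  have hz : z = z.re • (1 : ℂ) + z.im • Complex.I := by
    apply Complex.ext <;> simp
  have hIz : Jst ℂ z = z.re • Complex.I + z.im • (-1 : ℂ) := by
    apply Complex.ext <;> simp [Jst]
  rw [ContinuousLinearMap.comp_apply, ContinuousLinearMap.comp_apply, hIz]
  conv_rhs => rw [hz]
  simp only [map_add, map_smul, map_neg, h, hJJ]

/-- Multiplying by a bump function extends a function which is smooth near a point. -/
lemma exists_contDiff_eqOn_ball {E G : Type*} [NormedAddCommGroup E] [NormedSpace ℝ E]
    [HasContDiffBump E] [NormedAddCommGroup G] [NormedSpace ℝ G] {U : Set E} (hU : IsOpen U)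
    {g : E → G} (hg : ContDiffOn ℝ (⊤ : ℕ∞) g U) {q : E} (hq : q ∈ U) :
    ∃ Q : E → G, ContDiff ℝ (⊤ : ℕ∞) Q ∧ ∃ r > 0, ball q r ⊆ U ∧ EqOn Q g (ball q r) := by
  obtain ⟨ρ, hρ, hball⟩ := Metric.isOpen_iff.1 hU q hq
  let β : ContDiffBump q := ⟨ρ / 4, ρ / 2, by linarith, by linarith⟩
  refine ⟨fun y => β y • g y, contDiff_iff_contDiffAt.2 fun y => ?_, ρ / 4, by linarith,
    (ball_subset_ball (by linarith)).trans hball, fun y hy => ?_⟩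
  · by_cases hy : y ∈ ball q ρ
    · exact β.contDiff.contDiffAt.smul (hg.contDiffAt (hU.mem_nhds (hball hy)))
    · have hβ : β =ᶠ[𝓝 y] 0 := by
        rw [← notMem_tsupport_iff_eventuallyEq, β.tsupport_eq]
        exact fun h => hy (closedBall_subset_ball (show ρ / 2 < ρ by linarith) h)
      refine (contDiffAt_const (c := (0 : G))).congr_of_eventuallyEq ?_
      filter_upwards [hβ] with z hz
      simp [hz]
  · have : β y = 1 := β.one_of_mem_closedBall (ball_subset_closedBall hy)
    simp [this]

end Reduction

/-- **Existence of `J`-holomorphic discs in prescribed directions** (Nijenhuis–Woolf):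
for every `p ∈ Ω` there is a neighborhood `𝒱` of `0` such that every `v ∈ 𝒱` is the
tangent vector at `0` of a smooth `J`-holomorphic disc centered at `p`. -/
theorem statement17 {n : ℕ}
    (Ω : Set (EuclideanSpace ℂ (Fin n))) (hΩ : IsOpen Ω)
    (J : EuclideanSpace ℂ (Fin n) →
      EuclideanSpace ℂ (Fin n) →L[ℝ] EuclideanSpace ℂ (Fin n))
    (hJ : IsACS Ω J)
    (p : EuclideanSpace ℂ (Fin n)) (hp : p ∈ Ω) :
    ∃ V ∈ 𝓝 (0 : EuclideanSpace ℂ (Fin n)), ∀ v ∈ V,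
      ∃ f : ℂ → EuclideanSpace ℂ (Fin n),
        ContDiffOn ℝ (⊤ : ℕ∞) f (ball (0 : ℂ) 1) ∧ MapsTo f (ball (0 : ℂ) 1) Ω ∧
        (∀ ζ ∈ ball (0 : ℂ) 1,
          (fderiv ℝ f ζ).comp (Jst ℂ) = (J (f ζ)).comp (fderiv ℝ f ζ)) ∧
        f 0 = p ∧ fderiv ℝ f 0 1 = v := by
  let E := EuclideanSpace ℂ (Fin n)
  have hsq := hJ.sq p hp
  obtain ⟨e, he⟩ := exists_linearEquiv_conj (V := E) (n := n)
    (by rw [finrank_real_of_complex, finrank_euclideanSpace_fin]) (J p : E →ₗ[ℝ] E)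
    (LinearMap.ext fun x => DFunLike.congr_fun hsq x)
  let L : E ≃L[ℝ] E := e.toContinuousLinearEquiv
  have hL (x : E) : L (J p x) = Complex.I • L x := he x
  let U : Set E := L.symm ⁻¹' Ω
  have hU : IsOpen U := hΩ.preimage L.symm.continuous
  let g : E → E →L[ℝ] E := fun y =>
    (L : E →L[ℝ] E).comp ((J (L.symm y)).comp (L.symm : E →L[ℝ] E)) - Jst E
  have hg : ContDiffOn ℝ (⊤ : ℕ∞) g U :=
    (contDiffOn_const.clm_comp ((hJ.smooth.comp L.symm.contDiff.contDiffOn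
      (mapsTo_preimage _ _)).clm_comp contDiffOn_const)).sub contDiffOn_const
  have hq : L p ∈ U := by simpa [U] using hp
  obtain ⟨Q, hQ, r, hr, hrU, hQg⟩ := exists_contDiff_eqOn_ball hU hg hq
  have hQp : Q (L p) = 0 := by
    rw [hQg (mem_ball_self hr)]
    ext1 x
    have := hL (L.symm x)
    simp only [L.apply_symm_apply] at this
    simp [g, Jst, this]
  have hev := exists_disc_of_coeff hQ hQp hr
  have hlim : Tendsto (fun v : E => (16 : ℝ) • L v) (𝓝 0) (𝓝 0) := by
    have : Continuous fun v : E => (16 : ℝ) • L v := by fun_prop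
    simpa using this.tendsto 0
  refine ⟨_, hlim.eventually hev, fun v hv => ?_⟩
  obtain ⟨F, hF, hball, hF0, hF1⟩ := hv
  let s : ℂ →L[ℝ] ℂ := (1 / 16 : ℝ) • ContinuousLinearMap.id ℝ ℂ
  have hs (ζ : ℂ) (hζ : ζ ∈ ball (0 : ℂ) 1) : s ζ ∈ ball (0 : ℂ) (1 / 16) := by
    have : ‖ζ‖ < 1 := by simpa using hζ
    rw [mem_ball_zero_iff]
    change ‖(1 / 16 : ℝ) • ζ‖ < 1 / 16
    rw [norm_smul, Real.norm_of_nonneg (by norm_num)]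
    linarith
  have hd (ζ h : ℂ) : fderiv ℝ (fun ζ => L.symm (F (s ζ))) ζ h
      = (1 / 16 : ℝ) • L.symm (fderiv ℝ F (s ζ) h) := by
    have h1 := ((hF.differentiable (by simp) (s ζ)).hasFDerivAt).comp ζ s.hasFDerivAt
    have h2 := (L.symm : E →L[ℝ] E).hasFDerivAt.comp ζ h1
    have h3 : fderiv ℝ (fun ζ => L.symm (F (s ζ))) ζ = _ := h2.fderiv
    rw [h3]
    change L.symm (fderiv ℝ F (s ζ) ((1 / 16 : ℝ) • h)) = _
    rw [map_smul, map_smul]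
  refine ⟨fun ζ => L.symm (F (s ζ)),
    (L.symm.contDiff.comp (hF.comp s.contDiff)).contDiffOn,
    fun ζ hζ => hrU (hball _ (hs ζ hζ)).1, fun ζ hζ => ?_, ?_, ?_⟩
  · obtain ⟨hm, heq⟩ := hball _ (hs ζ hζ)
    refine comp_Jst_eq (hJ.sq _ (hrU hm)) ?_
    rw [hd, hd, heq, hQg hm, map_smul]
    congr 1
    simp [g, Jst]
  · simp [hF0]
  · rw [hd, map_zero, hF1, map_smul, smul_smul]
    simp

end
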